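/- Let p be a prime and n ≥ 1. Let M be an analytic submanifold of ℚ_p^n, let v ≥ n, and suppose w_p(y₀) ≤ v for some y₀ ∈ M. Then for almost every point y in a neighbourhood of y₀ in M (with respect to the smooth measure class on M) one has w_p(y) ≤ v. -/

import Mathlib

/-!
Clearing denominators, `w_p(y) ≤ u` holds as soon as, for all large `t`, every nonzero integer
vector `(q₀, q)` with `|q · y + q₀|_p ≤ p ^ (-t)` has sup norm at least `p ^ (t / (u + 1))`; so the
exponent is read off from the shortest vectors of a one-parameter family of lattices in
`ℤ ^ (n + 1)`.

Along a `p`-adic analytic curve through `y₀` the covolumes of these lattices, and of all their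
rational sublattices, are governed by linear combinations of finitely many power series. These are
`(C, α)`-good with uniform constants, because their Weierstrass degrees are bounded by compactness.
At `y₀` itself the short vectors are controlled by `w_p(y₀)`, and Minkowski's theorem turns this
into a lower bound for the covolumes of all sublattices. The quantitative nondivergence argument of
Kleinbock and Margulis then shows that, on the curve, vectors shorter than those at `y₀` by a
factor `ε` occur only on a set of measure `O(ε ^ α)`. Taking `ε = p ^ (-δ t)`, Borel–Cantelli gives
`w_p ≤ w_p(y₀)` almost everywhere on the curve. The general case follows from Fubini's theorem
applied to the lines through the base point: some scale is good for almost every direction.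
-/

open MeasureTheory Metric
open scoped ENNReal NNReal

namespace PadicDioph

variable (p : ℕ) [Fact p.Prime]

noncomputable instance : MeasurableSpace ℚ_[p] := borel _
instance : BorelSpace ℚ_[p] := ⟨rfl⟩

/-- Membership in `ℤ[1/p]`, viewed inside `ℚ`. -/
def IsZInvP (q : ℚ) : Prop := ∃ (z : ℤ) (k : ℕ), q = (z : ℚ) / (p : ℚ) ^ k

/-- Sup norm (max of archimedean absolute values) of a finite tuple of rationals. -/
noncomputable def supNormR {m : ℕ} (q : Fin m → ℚ) : ℝ := ⨆ i, |(q i : ℝ)|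

/-- Sup of the `p`-adic absolute values of a finite tuple of rationals. -/
noncomputable def supNormP {m : ℕ} (q : Fin m → ℚ) : ℝ := ⨆ i, ‖((q i : ℚ_[p]))‖

/-- Sup norm of an integer tuple together with an extra integer coordinate. -/
noncomputable def supNormZ {n : ℕ} (q0 : ℤ) (q : Fin n → ℤ) : ℝ :=
  max |(q0 : ℝ)| (⨆ i, |((q i : ℤ) : ℝ)|)

/-- The classical Diophantine exponent `w(y)` of `y ∈ ℚ_p^n`: the supremum of all `v > 0`
such that `|q₀ + q·y|_p ≤ ‖(q₀,q)‖_∞^{-v}` has infinitely many integer solutions. -/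
noncomputable def wExp {n : ℕ} (y : Fin n → ℚ_[p]) : ℝ≥0∞ :=
  ⨆ (v : ℝ) (_ : 0 < v ∧
    {qq : ℤ × (Fin n → ℤ) |
      ‖((qq.1 : ℚ_[p]) + ∑ i, (qq.2 i : ℚ_[p]) * y i)‖ ≤
        (supNormZ qq.1 qq.2) ^ (-v)}.Infinite), ENNReal.ofReal v

/-- `y` is very well approximable if `w(y) > n + 1`. -/
def IsVWA {n : ℕ} (y : Fin n → ℚ_[p]) : Prop :=
  ENNReal.ofReal ((n : ℝ) + 1) < wExp p y

/-- The defining condition of the exponent `w_p`: there are solutions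
`q̃ = (q₀, q) ∈ ℤ[1/p]^{n+1}` of `|q·y + q₀|_p < (‖q‖_p ‖q̃‖_∞)^{-v} ‖q̃‖_∞^{-1}`
with `‖q‖_p ‖q̃‖_∞` arbitrarily large. -/
def WpCond {n : ℕ} (y : Fin n → ℚ_[p]) (v : ℝ) : Prop :=
  ∀ T : ℝ, ∃ (q0 : ℚ) (q : Fin n → ℚ),
    IsZInvP p q0 ∧ (∀ i, IsZInvP p (q i)) ∧
    T < supNormP p q * supNormR (Fin.cons q0 q) ∧
    ‖(∑ i, (q i : ℚ_[p]) * y i) + (q0 : ℚ_[p])‖ <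
      (supNormP p q * supNormR (Fin.cons q0 q)) ^ (-v) * (supNormR (Fin.cons q0 q))⁻¹

/-- The exponent `w_p(y)`. -/
noncomputable def wpExp {n : ℕ} (y : Fin n → ℚ_[p]) : ℝ≥0∞ :=
  ⨆ (v : ℝ) (_ : 0 < v ∧ WpCond p y v), ENNReal.ofReal v

/-- `Π_+` of a tuple of rationals: the product of `|q_i|_∞` over the nonzero coordinates. -/
noncomputable def piPlusQ {m : ℕ} (q : Fin m → ℚ) : ℝ :=
  ∏ i, (if q i = 0 then 1 else |(q i : ℝ)|)

/-- `Π_+` of `(q₀, q)` with integer coordinates. -/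
noncomputable def piPlusZ {n : ℕ} (q0 : ℤ) (q : Fin n → ℤ) : ℝ :=
  (if q0 = 0 then 1 else |(q0 : ℝ)|) * ∏ i, (if q i = 0 then 1 else |((q i : ℤ) : ℝ)|)

/-- `y ∈ ℚ_p^n` is very well multiplicatively approximable. -/
def IsVWMA {n : ℕ} (y : Fin n → ℚ_[p]) : Prop :=
  ∃ ε : ℝ, 0 < ε ∧
    {qq : ℤ × (Fin n → ℤ) |
      ‖((qq.1 : ℚ_[p]) + ∑ i, (qq.2 i : ℚ_[p]) * y i)‖ ≤
        (piPlusZ qq.1 qq.2) ^ (-(1 + ε))}.Infinite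

/-- A measure on `ℚ_p^n` is strongly extremal if almost every point is not VWMA. -/
def StronglyExtremal {n : ℕ} (μ : Measure (Fin n → ℚ_[p])) : Prop :=
  ∀ᵐ y ∂μ, ¬ IsVWMA p y

/-- `δ(g_t u_y D^{n+1})` for the one-parameter flow: `g_t` has `p`-adic component
`diag(p^{-t},1,…,1)` and archimedean component `p^{-t/(n+1)}·Id`. -/
noncomputable def deltaOne {n : ℕ} (y : Fin n → ℚ_[p]) (t : ℕ) : ℝ :=
  sInf { c : ℝ | ∃ qt : Fin (n + 1) → ℚ, (∀ i, IsZInvP p (qt i)) ∧ qt ≠ 0 ∧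
    c = ((p : ℝ) ^ (-(t : ℝ) / ((n : ℝ) + 1)) * supNormR qt) *
        max (‖(((p : ℚ_[p]) ^ t)⁻¹ * ((qt 0 : ℚ_[p]) + ∑ i : Fin n, (qt i.succ : ℚ_[p]) * y i))‖)
            (⨆ i : Fin n, ‖((qt i.succ : ℚ_[p]))‖) }

/-- The exponent `γ(y)`. -/
noncomputable def gammaExp {n : ℕ} (y : Fin n → ℚ_[p]) : ℝ :=
  sSup {c : ℝ | 0 ≤ c ∧ ∀ N : ℕ, ∃ t : ℕ, N ≤ t ∧
    deltaOne p y t ≤ (p : ℝ) ^ (-(c * (t : ℝ)))}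

/-- `δ(g_t u_y D^{n+1})` for the multiparameter flow: for `t = (t₀,…,t_n)` with
`T = Σ tᵢ`, the `p`-adic component of `g_t` is `diag(p^{-T},1,…,1)` and the archimedean
component is `diag(p^{-t₀},…,p^{-t_n})`. -/
noncomputable def deltaMulti {n : ℕ} (y : Fin n → ℚ_[p]) (t : Fin (n + 1) → ℕ) : ℝ :=
  sInf { c : ℝ | ∃ qt : Fin (n + 1) → ℚ, (∀ i, IsZInvP p (qt i)) ∧ qt ≠ 0 ∧
    c = (⨆ i, (p : ℝ) ^ (-((t i : ℝ))) * |(qt i : ℝ)|) *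
        max (‖(((p : ℚ_[p]) ^ (∑ i, t i))⁻¹ *
              ((qt 0 : ℚ_[p]) + ∑ i : Fin n, (qt i.succ : ℚ_[p]) * y i))‖)
            (⨆ i : Fin n, ‖((qt i.succ : ℚ_[p]))‖) }

/-- The support of a measure on a metric space. -/
def measSupp {X : Type*} [MetricSpace X] [MeasurableSpace X] (μ : Measure X) : Set X :=
  {x | ∀ r : ℝ, 0 < r → 0 < μ (ball x r)}

/-- `‖f‖_{μ,B}`. -/
noncomputable def muSupNorm {X : Type*} [MetricSpace X] [MeasurableSpace X]
    (μ : Measure X) (B : Set X) (f : X → ℚ_[p]) : ℝ :=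
  sSup {c : ℝ | 0 < μ {x ∈ B | c < ‖f x‖}}

/-- `f` is `(C, α)`-good on `V` with respect to `μ`. -/
def IsGoodOn {X : Type*} [MetricSpace X] [MeasurableSpace X] (μ : Measure X)
    (C a : ℝ) (V : Set X) (f : X → ℚ_[p]) : Prop :=
  ∀ (x₀ : X) (r : ℝ), 0 < r → x₀ ∈ measSupp μ → ball x₀ r ⊆ V →
    ∀ ε : ℝ, 0 < ε →
      μ {x ∈ ball x₀ r | ‖f x‖ < ε} ≤
        ENNReal.ofReal (C * (ε / muSupNorm p μ (ball x₀ r) f) ^ a) * μ (ball x₀ r)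

/-- A metric space is Besicovitch: any family of balls whose centers exhaust a bounded
set `A` admits a countable subfamily covering `A` with multiplicity at most `N`. -/
def IsBesicovitch (X : Type*) [MetricSpace X] : Prop :=
  ∃ N : ℕ, ∀ (A : Set X), Bornology.IsBounded A →
    ∀ F : Set (X × ℝ), (∀ b ∈ F, 0 < b.2) → (∀ x ∈ A, ∃ r : ℝ, (x, r) ∈ F) →
      ∃ S ⊆ F, S.Countable ∧ (∀ x ∈ A, ∃ b ∈ S, x ∈ ball b.1 b.2) ∧
        ∀ x : X, {b ∈ S | x ∈ ball b.1 b.2}.encard ≤ N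

/-- `μ` is `D`-Federer on the open set `U`. -/
def IsDFedererOn {X : Type*} [MetricSpace X] [MeasurableSpace X]
    (μ : Measure X) (D : ℝ) (U : Set X) : Prop :=
  ∀ x ∈ measSupp μ, ∀ r : ℝ, 0 < r → ball x (3 * r) ⊆ U →
    μ (ball x (3 * r)) ≤ ENNReal.ofReal D * μ (ball x r)

/-- `μ` is Federer. -/
def IsFederer {X : Type*} [MetricSpace X] [MeasurableSpace X] (μ : Measure X) : Prop :=
  ∀ᵐ x ∂μ, ∃ U : Set X, IsOpen U ∧ x ∈ U ∧ 0 < μ U ∧ ∃ D : ℝ, 0 < D ∧ IsDFedererOn μ D U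

/-- The pair `(f, μ)` is good: `μ`-a.e. point has a neighbourhood `V` and `C, α > 0`
such that every affine combination `c₀ + Σ cᵢ fᵢ` is `(C, α)`-good on `V` w.r.t. `μ`. -/
def GoodPair {X : Type*} [MetricSpace X] [MeasurableSpace X] {n : ℕ}
    (f : X → (Fin n → ℚ_[p])) (μ : Measure X) : Prop :=
  ∀ᵐ x ∂μ, ∃ V : Set X, IsOpen V ∧ x ∈ V ∧ ∃ C a : ℝ, 0 < C ∧ 0 < a ∧
    ∀ c0 : ℚ_[p], ∀ c : Fin n → ℚ_[p],
      IsGoodOn p μ C a V (fun x => c0 + ∑ i, c i * f x i)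

/-- `(f, μ)` is nonplanar in the affine subspace `L`. -/
def NonplanarIn {X : Type*} [MetricSpace X] [MeasurableSpace X] {n : ℕ}
    (f : X → (Fin n → ℚ_[p])) (μ : Measure X)
    (L : AffineSubspace ℚ_[p] (Fin n → ℚ_[p])) : Prop :=
  ∀ B : Set X, IsOpen B → B.Nonempty → 0 < μ B →
    affineSpan ℚ_[p] (f '' (B ∩ measSupp μ)) = L

/-- `f` is nondegenerate in the affine subspace `L` at `x`: `f` takes values in `L` and the
span of the partial derivatives of `f` at `x` up to some order is the linear part of `L`. -/
def NondegenerateAt {d n : ℕ} (f : (Fin d → ℚ_[p]) → (Fin n → ℚ_[p]))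
    (L : AffineSubspace ℚ_[p] (Fin n → ℚ_[p])) (x : Fin d → ℚ_[p]) : Prop :=
  (∀ u, f u ∈ L) ∧ ∃ m : ℕ,
    Submodule.span ℚ_[p]
      {v : Fin n → ℚ_[p] | ∃ j : ℕ, j ≤ m ∧ 1 ≤ j ∧ ∃ vs : Fin j → (Fin d → ℚ_[p]),
        v = iteratedFDeriv ℚ_[p] j f x vs} = L.direction

/-- An analytic chart of the `d`-dimensional submanifold `M` of `ℚ_p^n`: an analytic map
`f` on an open set `U`, injective on `U`, immersive, a homeomorphism onto its image, whose
image is a relatively open subset of `M`. -/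
def IsChart (d n : ℕ) (M : Set (Fin n → ℚ_[p]))
    (U : Set (Fin d → ℚ_[p])) (f : (Fin d → ℚ_[p]) → (Fin n → ℚ_[p])) : Prop :=
  IsOpen U ∧ AnalyticOnNhd ℚ_[p] f U ∧ Set.InjOn f U ∧
  (∀ x ∈ U, Function.Injective (fderiv ℚ_[p] f x)) ∧
  (∀ x ∈ U, ∀ V : Set (Fin d → ℚ_[p]), IsOpen V → x ∈ V →
      ∃ W : Set (Fin n → ℚ_[p]), IsOpen W ∧ f x ∈ W ∧ W ∩ f '' U ⊆ f '' (V ∩ U)) ∧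
  ∃ W : Set (Fin n → ℚ_[p]), IsOpen W ∧ M ∩ W = f '' U

/-- `M` is a `d`-dimensional analytic submanifold of `ℚ_p^n`. -/
def IsAnalyticSubmanifold (d n : ℕ) (M : Set (Fin n → ℚ_[p])) : Prop :=
  M.Nonempty ∧ ∀ y ∈ M, ∃ (U : Set (Fin d → ℚ_[p])) (f : (Fin d → ℚ_[p]) → (Fin n → ℚ_[p])),
    IsChart p d n M U f ∧ y ∈ f '' U

variable {p}

section MaxMinor

open Matrix

variable {κ ι : Type*} [Fintype κ] [DecidableEq κ] [Fintype ι]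

/-- The largest absolute value of a maximal minor of an integer matrix. For rows that form a basis
of a lattice `Λ`, this is the sup norm of the exterior product representing `Λ`, and serves as the
covolume of `Λ`. -/
def maxMinor (B : Matrix κ ι ℤ) : ℕ :=
  Finset.univ.sup fun e : κ → ι ↦ (B.submatrix id e).det.natAbs

theorem natAbs_det_submatrix_le_maxMinor (B : Matrix κ ι ℤ) (e : κ → ι) :
    (B.submatrix id e).det.natAbs ≤ maxMinor B :=
  Finset.le_sup (f := fun e : κ → ι ↦ (B.submatrix id e).det.natAbs) (Finset.mem_univ e)

theorem exists_natAbs_det_submatrix_eq_maxMinor {B : Matrix κ ι ℤ} (hB : maxMinor B ≠ 0) :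
    ∃ e : κ → ι, (B.submatrix id e).det.natAbs = maxMinor B := by
  have hne : (Finset.univ : Finset (κ → ι)).Nonempty := by
    rw [Finset.nonempty_iff_ne_empty]
    intro hempty
    exact hB (by rw [maxMinor, hempty, Finset.sup_empty, bot_eq_zero])
  obtain ⟨e, -, he⟩ := Finset.exists_mem_eq_sup Finset.univ hne
    (fun e : κ → ι ↦ (B.submatrix id e).det.natAbs)
  exact ⟨e, he.symm⟩

theorem maxMinor_mul (A : Matrix κ κ ℤ) (B : Matrix κ ι ℤ) :
    maxMinor (A * B) = A.det.natAbs * maxMinor B := by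
  rw [maxMinor, maxMinor, Finset.apply_sup_eq_sup_comp_of_linearOrder (A.det.natAbs * ·)
    (fun _ _ h ↦ Nat.mul_le_mul_left _ h) (mul_zero _)]
  refine Finset.sup_congr rfl fun e _ ↦ ?_
  rw [Function.comp_apply, ← Int.natAbs_mul, ← det_mul]
  rfl

theorem maxMinor_cons_le {j N : ℕ} (w : ι → ℤ) (B : Matrix (Fin j) ι ℤ)
    (hw : ∀ i, (w i).natAbs ≤ N) :
    maxMinor (of (Fin.cons w B : Fin (j + 1) → ι → ℤ)) ≤ (j + 1) * N * maxMinor B := by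
  refine Finset.sup_le fun e _ ↦ ?_
  rw [det_succ_row_zero]
  have hterm (i : Fin (j + 1)) : ((-1 : ℤ) ^ (i : ℕ) * w (e i) *
      (B.submatrix id (e ∘ i.succAbove)).det).natAbs ≤ N * maxMinor B := by
    rw [Int.natAbs_mul, Int.natAbs_mul, Int.natAbs_pow, Int.natAbs_neg, Int.natAbs_one, one_pow,
      one_mul]
    exact Nat.mul_le_mul (hw _) (natAbs_det_submatrix_le_maxMinor B _)
  calc _ ≤ _ := Int.natAbs_sum_le _ _
    _ ≤ ∑ _i : Fin (j + 1), N * maxMinor B := Finset.sum_le_sum fun i _ ↦ hterm i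
    _ = (j + 1) * N * maxMinor B := by simp [mul_assoc]

theorem maxMinor_ne_zero_of_linearIndependent {B : Matrix κ ι ℤ}
    (hB : LinearIndependent ℚ (B.map (Int.castRingHom ℚ)).row) : maxMinor B ≠ 0 := by
  set BQ := B.map (Int.castRingHom ℚ)
  have hrank : Module.finrank ℚ (Submodule.span ℚ (Set.range BQ.col)) = Fintype.card κ := by
    rw [← rank_eq_finrank_span_cols, hB.rank_matrix]
  obtain ⟨f, hf, -, hfli⟩ := Submodule.exists_fun_fin_finrank_span_eq ℚ (Set.range BQ.col)
  choose e he using hf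
  let σ : κ ≃ Fin (Module.finrank ℚ (Submodule.span ℚ (Set.range BQ.col))) :=
    (Fintype.equivFin κ).trans (finCongr hrank.symm)
  have hcols : LinearIndependent ℚ (BQ.submatrix id (e ∘ σ)).col := by
    have : (BQ.submatrix id (e ∘ σ)).col = f ∘ σ := funext fun i ↦ he (σ i)
    rw [this]
    exact hfli.comp σ σ.injective
  rw [linearIndependent_cols_iff_isUnit, isUnit_iff_isUnit_det, isUnit_iff_ne_zero,
    show BQ.submatrix id (e ∘ σ) = (B.submatrix id (e ∘ σ)).map (Int.castRingHom ℚ) from rfl,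
    ← RingHom.mapMatrix_apply, ← RingHom.map_det] at hcols
  intro h0
  have hdet := natAbs_det_submatrix_le_maxMinor B (e ∘ σ)
  rw [h0, Nat.le_zero, Int.natAbs_eq_zero] at hdet
  exact hcols (by rw [hdet, map_zero])

theorem vecMul_ne_zero_of_maxMinor_ne_zero {B : Matrix κ ι ℤ} (hB : maxMinor B ≠ 0)
    {x : κ → ℤ} (hx : x ≠ 0) : x ᵥ* B ≠ 0 := by
  intro h0
  obtain ⟨e, he⟩ := exists_natAbs_det_submatrix_eq_maxMinor hB
  have hdet : (B.submatrix id e).det = 0 :=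
    exists_vecMul_eq_zero_iff.1 ⟨x, hx, funext fun i ↦ congrFun h0 (e i)⟩
  exact hB (by rw [← he, hdet, Int.natAbs_zero])

end MaxMinor

section Minkowski

open Matrix

variable {κ ι : Type*} [Fintype κ] [DecidableEq κ] [Fintype ι]

theorem exists_ne_zero_abs_vecMul_le [Nonempty κ] (M : Matrix κ κ ℝ) (hM : M.det ≠ 0) {r : ℝ}
    (hr : 0 ≤ r) (hdet : |M.det| ≤ r ^ Fintype.card κ) :
    ∃ x : κ → ℤ, x ≠ 0 ∧ ∀ l, |((fun i ↦ (x i : ℝ)) ᵥ* M) l| ≤ r := by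
  let b : Module.Basis κ ℝ (κ → ℝ) :=
    basisOfLinearIndependentOfCardEqFinrank (linearIndependent_rows_of_det_ne_zero hM) (by simp)
  have hb : (b : κ → κ → ℝ) = M := coe_basisOfLinearIndependentOfCardEqFinrank _ _
  have : Countable (Submodule.span ℤ (Set.range b)).toAddSubgroup :=
    inferInstanceAs (Countable (Submodule.span ℤ (Set.range b)))
  have : DiscreteTopology (Submodule.span ℤ (Set.range b)).toAddSubgroup :=
    inferInstanceAs (DiscreteTopology (Submodule.span ℤ (Set.range b)))
  have hvol : volume (ZSpan.fundamentalDomain b) * 2 ^ Module.finrank ℝ (κ → ℝ)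
      ≤ volume (closedBall (0 : κ → ℝ) r) := by
    rw [ZSpan.volume_fundamentalDomain, hb, Real.volume_pi_closedBall _ hr,
      Module.finrank_fintype_fun_eq_card, mul_pow, mul_comm, ENNReal.ofReal_mul (by positivity),
      ENNReal.ofReal_pow zero_le_two, ENNReal.ofReal_ofNat]
    gcongr
    exact hdet
  obtain ⟨⟨z, hz⟩, hz0, hzr⟩ := exists_ne_zero_mem_lattice_of_measure_mul_two_pow_le_measure
    (ZSpan.isAddFundamentalDomain' b volume) (fun x hx ↦ by simpa using hx)
    (convex_closedBall 0 r) (isCompact_closedBall 0 r) hvol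
  obtain ⟨x, hx⟩ := (Submodule.mem_span_range_iff_exists_fun ℤ).1 hz
  have hzx : (fun i ↦ (x i : ℝ)) ᵥ* M = z := by
    rw [← hx, vecMul_eq_sum, hb]
    exact Finset.sum_congr rfl fun i _ ↦ Int.cast_smul_eq_zsmul ℝ _ _
  refine ⟨x, ?_, fun l ↦ ?_⟩
  · rintro rfl
    exact hz0 (Subtype.ext (by simpa using hx.symm))
  · rw [hzx]
    exact (norm_le_pi_norm z l).trans (mem_closedBall_zero_iff.1 hzr)

/-- The columns outside a maximal minor of largest modulus are, by Cramer's rule, combinations of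
its columns with coefficients in `[-1, 1]`. -/
theorem maxMinor_mul_abs_vecMul_le (B : Matrix κ ι ℤ) {e : κ → ι}
    (he : (B.submatrix id e).det.natAbs = maxMinor B) (x : κ → ℤ) (i : ι) :
    (maxMinor B : ℤ) * |(x ᵥ* B) i| ≤ maxMinor B * ∑ l, |(x ᵥ* B) (e l)| := by
  set M := B.submatrix id e
  set c := M.cramer (fun k ↦ B k i)
  have hc (l : κ) : |c l| ≤ maxMinor B := by
    have : M.updateCol l (fun k ↦ B k i) = B.submatrix id (Function.update e l i) := by
      ext a k
      rcases eq_or_ne k l with rfl | hk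
      · simp
      · simp [M, updateCol_ne hk, Function.update_of_ne hk]
    rw [Int.abs_eq_natAbs, show c l = _ from cramer_apply _ _ _, this]
    exact_mod_cast natAbs_det_submatrix_le_maxMinor B _
  have hcramer : M.det * (x ᵥ* B) i = ∑ l, (x ᵥ* B) (e l) * c l := by
    have := dotProduct_mulVec x M c
    rwa [mulVec_cramer, dotProduct_smul] at this
  calc (maxMinor B : ℤ) * |(x ᵥ* B) i| = |M.det * (x ᵥ* B) i| := by
        rw [← he, abs_mul, Int.abs_eq_natAbs M.det]
    _ ≤ ∑ l, |(x ᵥ* B) (e l)| * |c l| := by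
        rw [hcramer]
        exact (Finset.abs_sum_le_sum_abs _ _).trans_eq (Finset.sum_congr rfl fun _ _ ↦ abs_mul _ _)
    _ ≤ ∑ l, |(x ᵥ* B) (e l)| * maxMinor B := by gcongr with l; exact hc l
    _ = maxMinor B * ∑ l, |(x ᵥ* B) (e l)| := by rw [← Finset.sum_mul, mul_comm]

theorem exists_ne_zero_abs_vecMul_le_of_maxMinor_le [Nonempty κ] {B : Matrix κ ι ℤ}
    (hB : maxMinor B ≠ 0) {r : ℝ} (hr : 0 ≤ r) (hBr : (maxMinor B : ℝ) ≤ r ^ Fintype.card κ) :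
    ∃ x : κ → ℤ, x ≠ 0 ∧ ∀ i, |(((x ᵥ* B) i : ℤ) : ℝ)| ≤ Fintype.card κ * r := by
  obtain ⟨e, he⟩ := exists_natAbs_det_submatrix_eq_maxMinor hB
  set M := (B.submatrix id e).map (Int.castRingHom ℝ)
  have hdet : |M.det| = maxMinor B := by
    change |((Int.castRingHom ℝ).mapMatrix (B.submatrix id e)).det| = _
    rw [← he, ← RingHom.map_det, eq_intCast, ← Int.cast_abs, Int.abs_eq_natAbs, Int.cast_natCast]
  obtain ⟨x, hx0, hx⟩ := exists_ne_zero_abs_vecMul_le M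
    (abs_ne_zero.1 (by rw [hdet]; exact_mod_cast hB)) hr (hdet.trans_le hBr)
  refine ⟨x, hx0, fun i ↦ ?_⟩
  have hxe (l : κ) : |(((x ᵥ* B) (e l) : ℤ) : ℝ)| ≤ r := by
    have hcast : (((x ᵥ* B) (e l) : ℤ) : ℝ) = ((fun i ↦ (x i : ℝ)) ᵥ* M) l := by
      simp [vecMul, dotProduct, M]
    rw [hcast]
    exact hx l
  have hpos : (0 : ℝ) < maxMinor B := by exact_mod_cast Nat.pos_of_ne_zero hB
  refine le_of_mul_le_mul_left ?_ hpos
  calc (maxMinor B : ℝ) * |(((x ᵥ* B) i : ℤ) : ℝ)|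
      ≤ maxMinor B * ∑ l, |(((x ᵥ* B) (e l) : ℤ) : ℝ)| := by
        exact_mod_cast maxMinor_mul_abs_vecMul_le B he x i
    _ ≤ maxMinor B * ∑ _l : κ, r := by gcongr with l; exact hxe l
    _ = maxMinor B * (Fintype.card κ * r) := by simp

end Minkowski

section IntBasis

open Matrix

/-- The inclusion of `ℤ^ι` into `ℚ^ι`. -/
def intToRat (ι : Type*) : (ι → ℤ) →ₗ[ℤ] (ι → ℚ) :=
  (Algebra.linearMap ℤ ℚ).compLeft ι

theorem intToRat_injective (ι : Type*) : Function.Injective (intToRat ι) :=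
  Function.Injective.comp_left Int.cast_injective

variable {κ ι : Type*} [Fintype κ]

/-- The rows of `B` form a `ℤ`-basis of the primitive lattice `V ∩ ℤ^ι`. -/
structure IsIntBasis (V : Submodule ℚ (ι → ℚ)) (B : Matrix κ ι ℤ) : Prop where
  span_eq : Submodule.span ℚ (Set.range fun i ↦ intToRat ι (B i)) = V
  linearIndependent : LinearIndependent ℚ fun i ↦ intToRat ι (B i)
  exists_vecMul_eq : ∀ z, intToRat ι z ∈ V → ∃ x : κ → ℤ, x ᵥ* B = z

namespace IsIntBasis

variable {V : Submodule ℚ (ι → ℚ)} {B : Matrix κ ι ℤ}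

theorem mem (hB : IsIntBasis V B) (i : κ) : intToRat ι (B i) ∈ V :=
  hB.span_eq.le (Submodule.subset_span ⟨i, rfl⟩)

theorem finrank_eq (hB : IsIntBasis V B) : Module.finrank ℚ V = Fintype.card κ := by
  rw [← hB.span_eq, finrank_span_eq_card hB.linearIndependent]

variable [DecidableEq κ] [Fintype ι]

theorem maxMinor_ne_zero (hB : IsIntBasis V B) : maxMinor B ≠ 0 :=
  maxMinor_ne_zero_of_linearIndependent hB.linearIndependent

end IsIntBasis

theorem exists_smul_intToRat_eq [Finite ι] (v : ι → ℚ) :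
    ∃ (c : ℚ) (z : ι → ℤ), c ≠ 0 ∧ c • v = intToRat ι z := by
  obtain ⟨d, hd⟩ := IsLocalization.exist_integer_multiples_of_finite (nonZeroDivisors ℤ) v
  choose z hz using hd
  refine ⟨(d : ℤ), z, Int.cast_ne_zero.2 (nonZeroDivisors.coe_ne_zero d), funext fun i ↦ ?_⟩
  exact (Int.cast_smul_eq_zsmul ℚ _ _).trans (hz i).symm

theorem exists_isIntBasis [Finite ι] (V : Submodule ℚ (ι → ℚ)) :
    ∃ B : Matrix (Fin (Module.finrank ℚ V)) ι ℤ, IsIntBasis V B := by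
  let L : Submodule ℤ (ι → ℤ) := (V.restrictScalars ℤ).comap (intToRat ι)
  let b := Module.finBasis ℤ L
  let B : Matrix (Fin (Module.finrank ℤ L)) ι ℤ := of fun i ↦ (b i : ι → ℤ)
  have hli : LinearIndependent ℚ fun i ↦ intToRat ι (B i) := by
    rw [← LinearIndependent.iff_fractionRing ℤ ℚ]
    exact b.linearIndependent.map' ((intToRat ι).comp L.subtype)
      (LinearMap.ker_eq_bot.2 ((intToRat_injective ι).comp L.injective_subtype))
  have hgen (z : ι → ℤ) (hz : intToRat ι z ∈ V) : ∃ x, x ᵥ* B = z := by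
    refine ⟨b.repr (⟨z, hz⟩ : L), ?_⟩
    have hsum := congrArg Subtype.val (b.sum_repr (⟨z, hz⟩ : L))
    rw [AddSubmonoidClass.coe_finsetSum] at hsum
    rwa [vecMul_eq_sum]
  have hspan : Submodule.span ℚ (Set.range fun i ↦ intToRat ι (B i)) = V := by
    refine le_antisymm (Submodule.span_le.2 <| Set.range_subset_iff.2 fun i ↦ (b i).2)
      fun v hv ↦ ?_
    obtain ⟨c, z, hc, hcv⟩ := exists_smul_intToRat_eq v
    obtain ⟨x, rfl⟩ := hgen z (hcv ▸ V.smul_mem c hv)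
    rw [← Submodule.smul_mem_iff _ hc, hcv, vecMul_eq_sum, map_sum]
    refine Submodule.sum_mem _ fun i _ ↦ ?_
    rw [map_smul, ← Int.cast_smul_eq_zsmul ℚ]
    exact Submodule.smul_mem _ _ (Submodule.subset_span ⟨i, rfl⟩)
  have hB : IsIntBasis V B := ⟨hspan, hli, hgen⟩
  rw [hB.finrank_eq, Fintype.card_fin]
  exact ⟨B, hB⟩

end IntBasis

section Covolume

open Matrix

variable {κ ι : Type*} [Fintype ι]

/-- The linear form with coefficients `Y`, evaluated at integer vectors. -/
noncomputable def linForm (Y : ι → ℚ_[p]) : (ι → ℤ) →ₗ[ℤ] ℚ_[p] :=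
  Fintype.linearCombination ℤ Y

theorem linForm_apply (Y : ι → ℚ_[p]) (z : ι → ℤ) : linForm Y z = ∑ i, (z i : ℚ_[p]) * Y i := by
  simp only [linForm, Fintype.linearCombination_apply, zsmul_eq_mul]

variable [Fintype κ]

theorem linForm_vecMul (Y : ι → ℚ_[p]) (x : κ → ℤ) (B : Matrix κ ι ℤ) :
    linForm Y (x ᵥ* B) = ∑ i, (x i : ℚ_[p]) * linForm Y (B i) := by
  rw [vecMul_eq_sum, map_sum]
  exact Finset.sum_congr rfl fun i _ ↦ by rw [map_smul, zsmul_eq_mul]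

theorem norm_linForm_vecMul_le (Y : ι → ℚ_[p]) (x : κ → ℤ) (B : Matrix κ ι ℤ) {c : ℝ} (hc : 0 ≤ c)
    (hB : ∀ i, ‖linForm Y (B i)‖ ≤ c) : ‖linForm Y (x ᵥ* B)‖ ≤ c := by
  rw [linForm_vecMul]
  refine IsUltrametricDist.norm_sum_le_of_forall_le_of_nonneg hc fun i _ ↦ ?_
  rw [norm_mul]
  exact (mul_le_of_le_one_left (norm_nonneg _) (Padic.norm_int_le_one _)).trans (hB i)

/-- The index, in the lattice with basis `B`, of the sublattice on which `linForm Y` has norm at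
most `p ^ (-t)`. -/
noncomputable def formIndex (t : ℕ) (Y : ι → ℚ_[p]) (B : Matrix κ ι ℤ) : ℝ :=
  max 1 ((p : ℝ) ^ t * ‖fun i ↦ linForm Y (B i)‖)

theorem one_le_formIndex (t : ℕ) (Y : ι → ℚ_[p]) (B : Matrix κ ι ℤ) : 1 ≤ formIndex t Y B :=
  le_max_left _ _

theorem pow_mul_norm_linForm_le_formIndex (t : ℕ) (Y : ι → ℚ_[p]) (B : Matrix κ ι ℤ) (i : κ) :
    (p : ℝ) ^ t * ‖linForm Y (B i)‖ ≤ formIndex t Y B :=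
  le_max_of_le_right <| by gcongr; exact norm_le_pi_norm (fun i ↦ linForm Y (B i)) i

theorem formIndex_le_iff {t : ℕ} {Y : ι → ℚ_[p]} {B : Matrix κ ι ℤ} {c : ℝ} (hc : 1 ≤ c) :
    formIndex t Y B ≤ c ↔ ∀ i, (p : ℝ) ^ t * ‖linForm Y (B i)‖ ≤ c := by
  have hp := (Fact.out : p.Prime).pos
  have hpt : 0 < (p : ℝ) ^ t := by positivity
  rw [formIndex, max_le_iff, and_iff_right hc, ← le_div_iff₀' hpt,
    pi_norm_le_iff_of_nonneg (by positivity)]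
  exact forall_congr' fun i ↦ le_div_iff₀' hpt

theorem formIndex_eq_one_or_exists (t : ℕ) (Y : ι → ℚ_[p]) (B : Matrix κ ι ℤ) :
    formIndex t Y B = 1 ∨ ∃ i, formIndex t Y B = (p : ℝ) ^ t * ‖linForm Y (B i)‖ := by
  rcases isEmpty_or_nonempty κ with hκ | hκ
  · exact Or.inl ((formIndex_le_iff le_rfl).2 hκ.elim |>.antisymm (one_le_formIndex t Y B))
  · obtain ⟨i, hi⟩ := (IsGreatest.pi_norm fun i ↦ linForm Y (B i)).1
    rw [formIndex, ← hi]
    exact (max_choice _ _).imp_right fun h ↦ ⟨i, h⟩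

theorem continuous_formIndex {X : Type*} [TopologicalSpace X] (t : ℕ) {Y : X → ι → ℚ_[p]}
    (hY : Continuous Y) (B : Matrix κ ι ℤ) : Continuous fun x ↦ formIndex t (Y x) B := by
  simp only [formIndex, linForm_apply]
  fun_prop

theorem one_le_natAbs_mul_padic_norm {k : ℤ} (hk : k ≠ 0) : 1 ≤ (k.natAbs : ℝ) * ‖(k : ℚ_[p])‖ := by
  have hp := (Fact.out : p.Prime).pos
  have hle : p ^ padicValInt p k ≤ k.natAbs :=
    Nat.le_of_dvd (Int.natAbs_pos.2 hk) pow_padicValNat_dvd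
  rw [Padic.norm_eq_zpow_neg_valuation (Int.cast_ne_zero.2 hk), Padic.valuation_intCast,
    _root_.zpow_neg, zpow_natCast, ← div_eq_mul_inv, one_le_div (by positivity)]
  exact_mod_cast hle

variable [DecidableEq κ]

theorem formIndex_le_natAbs_det_mul (t : ℕ) (Y : ι → ℚ_[p]) {A : Matrix κ κ ℤ} (hA : A.det ≠ 0)
    (B : Matrix κ ι ℤ) : formIndex t Y B ≤ A.det.natAbs * formIndex t Y (A * B) := by
  have hp := (Fact.out : p.Prime).pos
  have hpt : 0 < (p : ℝ) ^ t := by positivity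
  have h1 := one_le_formIndex t Y (A * B)
  have hdet : (1 : ℝ) ≤ A.det.natAbs := by exact_mod_cast Int.natAbs_pos.2 hA
  refine (formIndex_le_iff (one_le_mul_of_one_le_of_one_le hdet h1)).2 fun i ↦ ?_
  have hadj : A.adjugate i ᵥ* (A * B) = A.det • B i := by
    have : A.adjugate * (A * B) = A.det • B := by
      rw [← Matrix.mul_assoc, adjugate_mul, Matrix.smul_mul, Matrix.one_mul]
    exact congrFun this i
  have hform : ‖(A.det : ℚ_[p])‖ * ‖linForm Y (B i)‖ ≤ formIndex t Y (A * B) / (p : ℝ) ^ t := by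
    rw [← norm_mul, ← zsmul_eq_mul, ← map_smul, ← hadj]
    exact norm_linForm_vecMul_le Y _ _ (by positivity) fun k ↦
      (le_div_iff₀' hpt).2 (pow_mul_norm_linForm_le_formIndex t Y _ k)
  calc (p : ℝ) ^ t * ‖linForm Y (B i)‖
      ≤ (p : ℝ) ^ t * (A.det.natAbs * ‖(A.det : ℚ_[p])‖ * ‖linForm Y (B i)‖) := by
        gcongr
        exact le_mul_of_one_le_left (norm_nonneg _) (one_le_natAbs_mul_padic_norm hA)
    _ = A.det.natAbs * ((p : ℝ) ^ t * (‖(A.det : ℚ_[p])‖ * ‖linForm Y (B i)‖)) := by ring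
    _ ≤ A.det.natAbs * formIndex t Y (A * B) := by
        gcongr
        exact (le_div_iff₀' hpt).1 hform

/-- The covolume of the sublattice of the lattice with basis `B` on which `linForm Y` has norm at
most `p ^ (-t)`. -/
noncomputable def covol (t : ℕ) (Y : ι → ℚ_[p]) (B : Matrix κ ι ℤ) : ℝ :=
  maxMinor B * formIndex t Y B

theorem covol_of_isEmpty [IsEmpty κ] (t : ℕ) (Y : ι → ℚ_[p]) (B : Matrix κ ι ℤ) :
    covol t Y B = 1 := by
  simp [covol, maxMinor, formIndex, Finset.univ_unique, Subsingleton.elim _ (0 : κ → ℚ_[p])]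

theorem covol_le_covol_mul (t : ℕ) (Y : ι → ℚ_[p]) {A : Matrix κ κ ℤ} (hA : A.det ≠ 0)
    (B : Matrix κ ι ℤ) : covol t Y B ≤ covol t Y (A * B) := by
  rw [covol, covol, maxMinor_mul, Nat.cast_mul, mul_comm (A.det.natAbs : ℝ), mul_assoc]
  gcongr
  exact formIndex_le_natAbs_det_mul t Y hA B

theorem covol_cons_le {j : ℕ} (t : ℕ) (Y : ι → ℚ_[p]) {w : ι → ℤ} (B : Matrix (Fin j) ι ℤ)
    (hw : (p : ℝ) ^ t * ‖linForm Y w‖ ≤ 1) :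
    covol t Y (of (Fin.cons w B : Fin (j + 1) → ι → ℤ)) ≤ (j + 1) * ‖w‖ * covol t Y B := by
  have hindex : formIndex t Y (of (Fin.cons w B : Fin (j + 1) → ι → ℤ)) ≤ formIndex t Y B := by
    refine (formIndex_le_iff (one_le_formIndex t Y B)).2 (Fin.cases ?_ fun i ↦ ?_)
    · exact hw.trans (one_le_formIndex t Y B)
    · exact pow_mul_norm_linForm_le_formIndex t Y B i
  have hnatAbs (i : ι) : (w i).natAbs ≤ ⌊‖w‖⌋₊ := by
    rw [Nat.le_floor_iff (norm_nonneg w), ← Int.cast_natCast, Int.natCast_natAbs, Int.cast_abs]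
    exact norm_le_pi_norm w i
  have hminor : (maxMinor (of (Fin.cons w B : Fin (j + 1) → ι → ℤ)) : ℝ)
      ≤ (j + 1) * ‖w‖ * maxMinor B :=
    calc (maxMinor (of (Fin.cons w B : Fin (j + 1) → ι → ℤ)) : ℝ)
        ≤ (j + 1) * ⌊‖w‖⌋₊ * maxMinor B := by exact_mod_cast maxMinor_cons_le w B hnatAbs
      _ ≤ (j + 1) * ‖w‖ * maxMinor B := by gcongr; exact Nat.floor_le (norm_nonneg w)
  calc covol t Y (of (Fin.cons w B : Fin (j + 1) → ι → ℤ))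
      ≤ (j + 1) * ‖w‖ * maxMinor B * formIndex t Y B :=
        mul_le_mul hminor hindex (zero_le_one.trans (one_le_formIndex _ _ _)) (by positivity)
    _ = (j + 1) * ‖w‖ * covol t Y B := by rw [covol]; ring

theorem covol_sup_span_singleton_le {j j' : ℕ} (t : ℕ) (Y : ι → ℚ_[p])
    {V : Submodule ℚ (ι → ℚ)} {w : ι → ℤ} (hwV : intToRat ι w ∉ V)
    {B : Matrix (Fin j) ι ℤ} (hB : IsIntBasis V B)
    {B' : Matrix (Fin j') ι ℤ} (hB' : IsIntBasis (V ⊔ Submodule.span ℚ {intToRat ι w}) B')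
    (hw : (p : ℝ) ^ t * ‖linForm Y w‖ ≤ 1) : covol t Y B' ≤ (j + 1) * ‖w‖ * covol t Y B := by
  obtain rfl : j' = j + 1 := by
    simpa only [hB'.finrank_eq, hB.finrank_eq, Fintype.card_fin] using
      Submodule.finrank_sup_span_singleton hwV
  set C : Matrix (Fin (j + 1)) ι ℤ := of (Fin.cons w B : Fin (j + 1) → ι → ℤ)
  have hCmem (i) : intToRat ι (C i) ∈ V ⊔ Submodule.span ℚ {intToRat ι w} :=
    i.cases (Submodule.mem_sup_right (Submodule.mem_span_singleton_self _))
      fun i ↦ Submodule.mem_sup_left (hB.mem i)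
  choose A hA using fun i ↦ hB'.exists_vecMul_eq _ (hCmem i)
  have hCA : C = of A * B' := funext fun i ↦ (hA i).symm
  have hC : LinearIndependent ℚ fun i ↦ intToRat ι (C i) := by
    have hcons : (fun i ↦ intToRat ι (C i))
        = (Fin.cons (intToRat ι w) fun i ↦ intToRat ι (B i) : Fin (j + 1) → ι → ℚ) :=
      funext (Fin.cases rfl fun _ ↦ rfl)
    rw [hcons, linearIndependent_finCons, hB.span_eq]
    exact ⟨hB.linearIndependent, hwV⟩
  have hdet : (of A).det ≠ 0 := by
    intro h0
    apply maxMinor_ne_zero_of_linearIndependent (B := C) hC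
    rw [hCA, maxMinor_mul, h0, Int.natAbs_zero, zero_mul]
  calc covol t Y B' ≤ covol t Y C := hCA ▸ covol_le_covol_mul t Y hdet B'
    _ ≤ (j + 1) * ‖w‖ * covol t Y B := covol_cons_le t Y B hw

theorem exists_int_norm_sub_mul_le {a b : ℚ_[p]} (hba : ‖b‖ ≤ ‖a‖) (u : ℕ) :
    ∃ k : ℤ, ‖b - k * a‖ ≤ ‖a‖ / (p : ℝ) ^ u := by
  let x : ℤ_[p] := ⟨b / a, by rw [norm_div]; exact div_le_one_of_le₀ hba (norm_nonneg _)⟩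
  have hx : (x : ℚ_[p]) * a = b :=
    div_mul_cancel_of_imp fun ha ↦ by simpa [ha] using hba
  refine ⟨x.appr u, ?_⟩
  have happr : ‖((x - x.appr u : ℤ_[p]) : ℚ_[p])‖ ≤ (p : ℝ) ^ (-(u : ℤ)) :=
    (PadicInt.norm_le_pow_iff_mem_span_pow _ _).2 (PadicInt.appr_spec u x)
  calc ‖b - (x.appr u : ℤ) * a‖ = ‖((x - x.appr u : ℤ_[p]) : ℚ_[p])‖ * ‖a‖ := by
        rw [← norm_mul, PadicInt.coe_sub, sub_mul, hx]; norm_cast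
    _ ≤ (p : ℝ) ^ (-(u : ℤ)) * ‖a‖ := by gcongr
    _ = ‖a‖ / (p : ℝ) ^ u := by rw [_root_.zpow_neg, zpow_natCast, div_eq_inv_mul]

/-- Subtracting multiples of the row where the form is largest and scaling that row brings the
form below `p ^ (-t)` on all rows. -/
theorem exists_det_eq_pow_of_pivot {t u : ℕ} {Y : ι → ℚ_[p]} {B : Matrix κ ι ℤ} {i₀ : κ}
    (hmax : ∀ i, ‖linForm Y (B i)‖ ≤ ‖linForm Y (B i₀)‖)
    (hu : (p : ℝ) ^ t * ‖linForm Y (B i₀)‖ = (p : ℝ) ^ u) :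
    ∃ T : Matrix κ κ ℤ, T.det = (p : ℤ) ^ u ∧ ∀ i, (p : ℝ) ^ t * ‖linForm Y ((T * B) i)‖ ≤ 1 := by
  have hp := (Fact.out : p.Prime).pos
  choose k hk using fun i ↦ exists_int_norm_sub_mul_le (hmax i) u
  set c : κ → ℤ := Function.update (-k) i₀ ((p : ℤ) ^ u - 1) with hc
  have hc₀ : c i₀ = (p : ℤ) ^ u - 1 := Function.update_self _ _ _
  refine ⟨1 + vecMulVec c (Pi.single i₀ 1), ?_, fun i ↦ ?_⟩
  · rw [vecMulVec_eq Unit, det_one_add_replicateCol_mul_replicateRow, single_one_dotProduct, hc₀,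
      add_sub_cancel]
  have hrow : ((1 + vecMulVec c (Pi.single i₀ 1) : Matrix κ κ ℤ) * B : Matrix κ ι ℤ) i
      = B i + c i • B i₀ := by
    rw [Matrix.add_mul, Matrix.one_mul, vecMulVec_mul, single_one_vecMul]
    rfl
  rw [hrow, map_add, map_smul, zsmul_eq_mul]
  rcases eq_or_ne i i₀ with rfl | hi
  · rw [hc₀, Int.cast_sub, Int.cast_pow, Int.cast_natCast, Int.cast_one, sub_mul, one_mul,
      add_sub_cancel, norm_mul, norm_pow, Padic.norm_p, mul_left_comm, hu, ← mul_pow,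
      inv_mul_cancel₀ (by positivity), one_pow]
  · rw [hc, Function.update_of_ne hi, Pi.neg_apply, Int.cast_neg, neg_mul, ← sub_eq_add_neg]
    calc (p : ℝ) ^ t * ‖linForm Y (B i) - k i * linForm Y (B i₀)‖
        ≤ (p : ℝ) ^ t * (‖linForm Y (B i₀)‖ / (p : ℝ) ^ u) := by gcongr; exact hk i
      _ = 1 := by rw [← mul_div_assoc, hu, div_self (by positivity)]

theorem exists_natAbs_det_eq_formIndex (t : ℕ) (Y : ι → ℚ_[p]) (B : Matrix κ ι ℤ) :
    ∃ T : Matrix κ κ ℤ, (T.det.natAbs : ℝ) = formIndex t Y B ∧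
      ∀ i, (p : ℝ) ^ t * ‖linForm Y ((T * B) i)‖ ≤ 1 := by
  have hp := (Fact.out : p.Prime).pos
  have hp1 : 1 < (p : ℝ) := by exact_mod_cast (Fact.out : p.Prime).one_lt
  rcases (one_le_formIndex t Y B).eq_or_lt' with h1 | h1
  · refine ⟨1, by simp [h1], fun i ↦ ?_⟩
    rw [Matrix.one_mul, ← h1]
    exact pow_mul_norm_linForm_le_formIndex t Y B i
  obtain ⟨i₀, hi₀⟩ := (formIndex_eq_one_or_exists t Y B).resolve_left h1.ne'
  have hmax (i : κ) : ‖linForm Y (B i)‖ ≤ ‖linForm Y (B i₀)‖ :=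
    le_of_mul_le_mul_left (hi₀ ▸ pow_mul_norm_linForm_le_formIndex t Y B i) (by positivity)
  have hne : linForm Y (B i₀) ≠ 0 := by
    intro h0
    rw [hi₀, h0, norm_zero, mul_zero] at h1
    exact absurd h1 (by norm_num)
  have hval : formIndex t Y B = (p : ℝ) ^ ((t : ℤ) - (linForm Y (B i₀)).valuation) := by
    rw [hi₀, Padic.norm_eq_zpow_neg_valuation hne, ← zpow_natCast, ← zpow_add₀ (by positivity),
      sub_eq_add_neg]
  obtain ⟨u, hu⟩ := Int.eq_ofNat_of_zero_le ((one_lt_zpow_iff_right₀ hp1).1 (hval ▸ h1)).le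
  rw [hu, zpow_natCast] at hval
  obtain ⟨T, hT, hTB⟩ := exists_det_eq_pow_of_pivot hmax (hi₀.symm.trans hval)
  exact ⟨T, by rw [hT, hval, Int.natAbs_pow, Int.natAbs_natCast, Nat.cast_pow], hTB⟩

theorem div_card_pow_card_le_covol [Nonempty κ] {t : ℕ} {Y : ι → ℚ_[p]} {B : Matrix κ ι ℤ}
    (hB : maxMinor B ≠ 0) {R : ℝ} (hR : 0 ≤ R)
    (hY : ∀ z : ι → ℤ, z ≠ 0 → (p : ℝ) ^ t * ‖linForm Y z‖ ≤ 1 → R ≤ ‖z‖) :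
    (R / Fintype.card κ) ^ Fintype.card κ ≤ covol t Y B := by
  have hp := (Fact.out : p.Prime).pos
  have hκ : (0 : ℝ) < Fintype.card κ := by exact_mod_cast Fintype.card_pos
  have hindex : 0 < formIndex t Y B := one_pos.trans_le (one_le_formIndex t Y B)
  have hcovol : 0 < covol t Y B := mul_pos (by exact_mod_cast Nat.pos_of_ne_zero hB) hindex
  obtain ⟨T, hT, hTB⟩ := exists_natAbs_det_eq_formIndex t Y B
  have hTcovol : (maxMinor (T * B) : ℝ) = covol t Y B := by
    rw [maxMinor_mul, Nat.cast_mul, hT, covol, mul_comm]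
  have hTB0 : maxMinor (T * B) ≠ 0 := by
    rw [← Nat.cast_ne_zero (R := ℝ), hTcovol]
    exact hcovol.ne'
  set r := covol t Y B ^ (Fintype.card κ : ℝ)⁻¹
  have hr : r ^ Fintype.card κ = covol t Y B :=
    Real.rpow_inv_natCast_pow hcovol.le Fintype.card_ne_zero
  have hr0 : 0 ≤ r := by positivity
  obtain ⟨x, hx0, hx⟩ := exists_ne_zero_abs_vecMul_le_of_maxMinor_le hTB0 hr0
    (hTcovol.trans hr.symm).le
  have hform : (p : ℝ) ^ t * ‖linForm Y (x ᵥ* (T * B))‖ ≤ 1 := by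
    rw [← le_div_iff₀' (by positivity)]
    exact norm_linForm_vecMul_le Y x _ (by positivity) fun i ↦
      (le_div_iff₀' (by positivity)).2 (hTB i)
  have hRr : R ≤ Fintype.card κ * r :=
    (hY _ (vecMul_ne_zero_of_maxMinor_ne_zero hTB0 hx0) hform).trans
      ((pi_norm_le_iff_of_nonneg (by positivity)).2 hx)
  rw [← hr]
  gcongr
  exact (div_le_iff₀' hκ).2 hRr

end Covolume

section IntegerBalls

noncomputable instance : MeasurableSpace ℤ_[p] := borel _
instance : BorelSpace ℤ_[p] := ⟨rfl⟩

/-- The residue class of `x` modulo `p ^ k` in `ℤ_p`, seen as a ball. -/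
def padicBall (x : ℤ_[p]) (k : ℕ) : Set ℤ_[p] := closedBall x ((p : ℝ) ^ (-(k : ℤ)))

theorem mem_padicBall {x y : ℤ_[p]} {k : ℕ} :
    y ∈ padicBall x k ↔ ‖y - x‖ ≤ (p : ℝ) ^ (-(k : ℤ)) := by
  rw [padicBall, mem_closedBall, dist_eq_norm]

theorem self_mem_padicBall (x : ℤ_[p]) (k : ℕ) : x ∈ padicBall x k :=
  mem_closedBall_self (by positivity)

theorem padicBall_eq_of_mem {x y : ℤ_[p]} {k : ℕ} (h : y ∈ padicBall x k) :
    padicBall x k = padicBall y k :=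
  IsUltrametricDist.closedBall_eq_of_mem h

theorem padicBall_anti (x : ℤ_[p]) : Antitone (padicBall x) := fun k l hkl ↦
  closedBall_subset_closedBall <|
    zpow_le_zpow_right₀ (mod_cast (Fact.out : p.Prime).one_le) (by lia)

theorem isOpen_padicBall (x : ℤ_[p]) (k : ℕ) : IsOpen (padicBall x k) :=
  have hp := (Fact.out : p.Prime).pos
  IsUltrametricDist.isOpen_closedBall x (by positivity)

theorem padicBall_zero (x : ℤ_[p]) : padicBall x 0 = Set.univ := by
  ext y
  simp [mem_padicBall, PadicInt.norm_le_one]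

theorem exists_padicBall_subset {U : Set ℤ_[p]} (hU : IsOpen U) {x : ℤ_[p]} (hx : x ∈ U) :
    ∃ k, padicBall x k ⊆ U := by
  obtain ⟨ε, hε, hball⟩ := Metric.isOpen_iff.1 hU x hx
  obtain ⟨k, hk⟩ := PadicInt.exists_pow_neg_lt p hε
  exact ⟨k, (closedBall_subset_ball hk).trans hball⟩

variable (ν : Measure ℤ_[p]) [ν.IsAddHaarMeasure]

theorem pow_mul_measure_padicBall (x : ℤ_[p]) (k : ℕ) :
    (p : ℝ≥0∞) ^ k * ν (padicBall x k) = ν Set.univ := by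
  let H : AddSubgroup ℤ_[p] := (PadicInt.toZModPow k : ℤ_[p] →+* ZMod (p ^ k)).toAddMonoidHom.ker
  have hH : (H : Set ℤ_[p]) = padicBall 0 k := by
    ext y
    have hker : y ∈ H ↔ y ∈ RingHom.ker (PadicInt.toZModPow k : ℤ_[p] →+* ZMod (p ^ k)) := Iff.rfl
    rw [SetLike.mem_coe, hker, PadicInt.ker_toZModPow, ← PadicInt.norm_le_pow_iff_mem_span_pow,
      mem_padicBall, sub_zero]
  have hindex : H.index = p ^ k := by
    rw [AddSubgroup.index_ker, AddMonoidHom.range_eq_top.2 (ZMod.ringHom_surjective _)]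
    simp
  have : H.FiniteIndex := ⟨by rw [hindex]; exact pow_ne_zero _ (Fact.out : p.Prime).ne_zero⟩
  have hmeas := H.index_mul_measure (hH ▸ (isOpen_padicBall 0 k).measurableSet) ν
  rwa [hindex, hH, Nat.cast_pow, padicBall, ← Measure.addHaar_closedBall_center ν x] at hmeas

theorem measure_padicBall_eq_pow_mul (x : ℤ_[p]) (k l : ℕ) :
    ν (padicBall x k) = (p : ℝ≥0∞) ^ l * ν (padicBall x (k + l)) := by
  have hp : (p : ℝ≥0∞) ^ k ≠ 0 := pow_ne_zero _ (mod_cast (Fact.out : p.Prime).ne_zero)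
  rw [← ENNReal.mul_right_inj hp (by finiteness), pow_mul_measure_padicBall, ← mul_assoc, ← pow_add,
    pow_mul_measure_padicBall]

theorem measure_norm_sub_lt_le (z : ℤ_[p]) (k : ℕ) {δ : ℝ} (hδ : 0 < δ) (hδ' : δ ≤ 1) :
    ν {x | ‖x - z‖ < δ * (p : ℝ) ^ (-(k : ℤ))} ≤ ENNReal.ofReal (p * δ) * ν (padicBall z k) := by
  have hp := (Fact.out : p.Prime).pos
  have hp' : (1 : ℝ) < p := mod_cast (Fact.out : p.Prime).one_lt
  obtain ⟨l, hlt, hle⟩ := exists_nat_pow_near_of_lt_one hδ hδ' (y := (p : ℝ)⁻¹) (by positivity)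
    (inv_lt_one_of_one_lt₀ hp')
  have hsub : {x | ‖x - z‖ < δ * (p : ℝ) ^ (-(k : ℤ))} ⊆ padicBall z (k + l) := fun x hx ↦ by
    refine mem_padicBall.2 ((le_of_lt hx).trans ?_)
    rw [Nat.cast_add, neg_add, zpow_add₀ (by positivity), mul_comm, zpow_neg _ (l : ℤ),
      zpow_natCast, ← inv_pow]
    gcongr
  have hone : 1 ≤ ENNReal.ofReal (p * δ) * (p : ℝ≥0∞) ^ l := by
    rw [← ENNReal.ofReal_natCast, ← ENNReal.ofReal_pow (by positivity),
      ← ENNReal.ofReal_mul (by positivity), ENNReal.one_le_ofReal]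
    rw [inv_pow, inv_lt_iff_one_lt_mul₀ (by positivity), pow_succ] at hlt
    linarith
  calc ν {x | ‖x - z‖ < δ * (p : ℝ) ^ (-(k : ℤ))} ≤ 1 * ν (padicBall z (k + l)) := by
        rw [one_mul]; exact measure_mono hsub
    _ ≤ ENNReal.ofReal (p * δ) * (p : ℝ≥0∞) ^ l * ν (padicBall z (k + l)) := by gcongr
    _ = ENNReal.ofReal (p * δ) * ν (padicBall z k) := by
        rw [mul_assoc, ← measure_padicBall_eq_pow_mul]

end IntegerBalls

section PowerSeries

open Filter Topology

/-- The value at `x ∈ ℤ_p` of the power series with coefficients `g`; the series converges as soon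
as `g` tends to zero. -/
noncomputable def evalSeries (g : ℕ → ℚ_[p]) (x : ℤ_[p]) : ℚ_[p] := ∑' k, g k * (x : ℚ_[p]) ^ k

/-- The values at `z` of the successive tails `∑ k, g (k + i) * z ^ k` of a power series. -/
noncomputable def tailEval (g : ℕ → ℚ_[p]) (z : ℤ_[p]) (i : ℕ) : ℚ_[p] :=
  evalSeries (fun k ↦ g (k + i)) z

/-- The coefficients of the power series of the difference quotient
`x ↦ (evalSeries g x - evalSeries g z) / (x - z)`. -/
noncomputable def diffQuot (g : ℕ → ℚ_[p]) (z : ℤ_[p]) (i : ℕ) : ℚ_[p] := tailEval g z (i + 1)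

/-- The largest index at which the coefficients of a power series attain their maximal absolute
value; by the Weierstrass preparation theorem this is the number of zeros of the series in the unit
ball of an algebraic closure. -/
structure IsWeierstrassDegree (g : ℕ → ℚ_[p]) (j : ℕ) : Prop where
  ne_zero : g j ≠ 0
  norm_le : ∀ i, ‖g i‖ ≤ ‖g j‖
  norm_lt : ∀ i, j < i → ‖g i‖ < ‖g j‖

theorem norm_mul_coe_pow_le (a : ℚ_[p]) (x : ℤ_[p]) (k : ℕ) : ‖a * (x : ℚ_[p]) ^ k‖ ≤ ‖a‖ := by
  rw [norm_mul, norm_pow]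
  exact mul_le_of_le_one_right (norm_nonneg _) (pow_le_one₀ (norm_nonneg _) x.2)

theorem norm_evalSeries_le {g : ℕ → ℚ_[p]} {c : ℝ} (h : ∀ k, ‖g k‖ ≤ c) (x : ℤ_[p]) :
    ‖evalSeries g x‖ ≤ c :=
  IsUltrametricDist.norm_tsum_le_of_forall_le fun k ↦ (norm_mul_coe_pow_le _ x k).trans (h k)

theorem norm_le_norm_div_of_lt {a b : ℚ_[p]} (h : ‖a‖ < ‖b‖) : ‖a‖ ≤ ‖b‖ / p := by
  have hp : (p : ℝ) ≠ 0 := mod_cast (Fact.out : p.Prime).ne_zero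
  have hb : b ≠ 0 := norm_pos_iff.1 ((norm_nonneg a).trans_lt h)
  rw [Padic.norm_eq_zpow_neg_valuation hb] at h ⊢
  rwa [Padic.norm_lt_pow_iff_norm_le_pow_sub_one, zpow_sub_one₀ hp] at h

namespace IsWeierstrassDegree

variable {g : ℕ → ℚ_[p]} {j : ℕ}

theorem norm_tailEval_lt (h : IsWeierstrassDegree g j) (z : ℤ_[p]) {i : ℕ} (hi : j < i) :
    ‖tailEval g z i‖ < ‖g j‖ :=
  (norm_evalSeries_le (fun k ↦ norm_le_norm_div_of_lt (h.norm_lt (k + i) (by lia))) z).trans_lt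
    (div_lt_self (norm_pos_iff.2 h.ne_zero) (mod_cast (Fact.out : p.Prime).one_lt))

end IsWeierstrassDegree

variable {g : ℕ → ℚ_[p]} (hg : Tendsto g atTop (𝓝 0))
include hg

theorem summable_mul_coe_pow (x : ℤ_[p]) : Summable fun k ↦ g k * (x : ℚ_[p]) ^ k := by
  refine NonarchimedeanAddGroup.summable_of_tendsto_cofinite_zero ?_
  rw [Nat.cofinite_eq_atTop]
  exact squeeze_zero_norm (fun k ↦ norm_mul_coe_pow_le _ x k)
    (tendsto_zero_iff_norm_tendsto_zero.1 hg)

theorem evalSeries_eq_add (x : ℤ_[p]) :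
    evalSeries g x = g 0 + x * evalSeries (fun k ↦ g (k + 1)) x := by
  rw [evalSeries, (summable_mul_coe_pow hg x).tsum_eq_zero_add, evalSeries, ← tsum_mul_left]
  simp only [pow_zero, mul_one, pow_succ', mul_left_comm]

theorem tailEval_eq_add (z : ℤ_[p]) (i : ℕ) : tailEval g z i = g i + z * tailEval g z (i + 1) := by
  rw [tailEval, evalSeries_eq_add ((tendsto_add_atTop_iff_nat i).2 hg), tailEval]
  simp only [zero_add, add_right_comm _ 1 i, add_assoc]

theorem tendsto_tailEval (z : ℤ_[p]) : Tendsto (tailEval g z) atTop (𝓝 0) := by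
  rw [NormedAddCommGroup.tendsto_atTop] at hg ⊢
  intro ε hε
  obtain ⟨N, hN⟩ := hg (ε / 2) (by positivity)
  refine ⟨N, fun i hi ↦ ?_⟩
  have hbound : ‖tailEval g z i‖ ≤ ε / 2 :=
    norm_evalSeries_le (fun k ↦ by simpa using (hN (k + i) (by lia)).le) z
  rw [sub_zero]
  linarith

theorem tendsto_diffQuot (z : ℤ_[p]) : Tendsto (diffQuot g z) atTop (𝓝 0) :=
  (tendsto_add_atTop_iff_nat 1).2 (tendsto_tailEval hg z)

theorem evalSeries_sub_evalSeries (x z : ℤ_[p]) :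
    evalSeries g x - evalSeries g z = ((x : ℚ_[p]) - z) * evalSeries (diffQuot g z) x := by
  have hcoeff (k : ℕ) : g k = tailEval g z k - z * diffQuot g z k := by
    rw [tailEval_eq_add hg z k, diffQuot, add_sub_cancel_right]
  have hsplit : evalSeries g x = evalSeries (tailEval g z) x - z * evalSeries (diffQuot g z) x := by
    rw [evalSeries, evalSeries, evalSeries, ← tsum_mul_left,
      ← (summable_mul_coe_pow (tendsto_tailEval hg z) x).tsum_sub
        ((summable_mul_coe_pow (tendsto_diffQuot hg z) x).mul_left _)]
    simp only [hcoeff, sub_mul, mul_assoc]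
  have htail : evalSeries (tailEval g z) x = evalSeries g z + x * evalSeries (diffQuot g z) x :=
    evalSeries_eq_add (tendsto_tailEval hg z) x
  rw [hsplit, htail]
  ring

theorem continuous_evalSeries : Continuous (evalSeries g) := by
  obtain ⟨C, hC⟩ := hg.norm.bddAbove_range
  have hC' (k : ℕ) : ‖g k‖ ≤ C := hC ⟨k, rfl⟩
  have hlip : LipschitzWith C.toNNReal (evalSeries g) := by
    refine LipschitzWith.of_dist_le_mul fun x z ↦ ?_
    have hquot : ‖evalSeries (diffQuot g z) x‖ ≤ C :=
      norm_evalSeries_le (fun i ↦ norm_evalSeries_le (fun k ↦ hC' _) z) x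
    rw [dist_eq_norm, evalSeries_sub_evalSeries hg, norm_mul, mul_comm,
      Real.coe_toNNReal _ ((norm_nonneg _).trans (hC' 0))]
    exact mul_le_mul_of_nonneg_right hquot (norm_nonneg _)
  exact hlip.continuous

namespace IsWeierstrassDegree

variable {j : ℕ}

theorem norm_tailEval (h : IsWeierstrassDegree g j) (z : ℤ_[p]) : ‖tailEval g z j‖ = ‖g j‖ := by
  have hlt : ‖(z : ℚ_[p]) * tailEval g z (j + 1)‖ < ‖g j‖ := by
    rw [norm_mul]
    exact (mul_le_of_le_one_left (norm_nonneg _) z.2).trans_lt (h.norm_tailEval_lt z j.lt_succ_self)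
  rw [tailEval_eq_add hg, IsUltrametricDist.norm_add_eq_max_of_norm_ne_norm hlt.ne',
    max_eq_left hlt.le]

theorem isWeierstrassDegree_diffQuot (h : IsWeierstrassDegree g (j + 1)) (z : ℤ_[p]) :
    IsWeierstrassDegree (diffQuot g z) j := by
  have hj : ‖diffQuot g z j‖ = ‖g (j + 1)‖ := h.norm_tailEval hg z
  refine ⟨?_, fun i ↦ ?_, fun i hi ↦ ?_⟩
  · rw [← norm_ne_zero_iff, hj]
    exact norm_ne_zero_iff.2 h.ne_zero
  · rw [hj]
    exact norm_evalSeries_le (fun k ↦ h.norm_le _) z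
  · rw [hj]
    exact h.norm_tailEval_lt z (by lia)

end IsWeierstrassDegree

end PowerSeries

section GoodFunctions

open Filter Topology

/-- The `(C, a)`-good functions of Kleinbock and Margulis on `ℤ_p`: if `φ` reaches `η` somewhere in
a ball, then it is smaller than `ε * η` only on a proportion `C * ε ^ a` of that ball. -/
def IsGood (ν : Measure ℤ_[p]) (C a : ℝ) (φ : ℤ_[p] → ℝ) : Prop :=
  ∀ (x₀ : ℤ_[p]) (k : ℕ) ⦃η ε : ℝ⦄, 0 < η → 0 < ε → ε ≤ 1 → (∃ x ∈ padicBall x₀ k, η ≤ φ x) →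
    ν {x ∈ padicBall x₀ k | φ x < ε * η} ≤ ENNReal.ofReal (C * ε ^ a) * ν (padicBall x₀ k)

namespace IsGood

variable {ν : Measure ℤ_[p]} {C a : ℝ} {φ : ℤ_[p] → ℝ}

theorem const (c : ℝ) : IsGood ν C a fun _ ↦ c := by
  rintro x₀ k η ε hη - hε' ⟨x, -, hx⟩
  have hle : ε * η ≤ c := (mul_le_of_le_one_left hη.le hε').trans hx
  simp [hle.not_gt]

theorem const_mul (h : IsGood ν C a φ) {c : ℝ} (hc : 0 < c) : IsGood ν C a fun x ↦ c * φ x := by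
  rintro x₀ k η ε hη hε hε' ⟨x, hx, hηx⟩
  have hscale (y : ℤ_[p]) : c * φ y < ε * η ↔ φ y < ε * (η / c) := by
    rw [← mul_div_assoc, lt_div_iff₀' hc]
  simp only [hscale]
  exact h x₀ k (div_pos hη hc) hε hε' ⟨x, hx, (div_le_iff₀' hc).2 hηx⟩

theorem of_forall_exists_eq {κ : Type*} {ψ : κ → ℤ_[p] → ℝ} (hψ : ∀ i, IsGood ν C a (ψ i))
    (hle : ∀ i x, ψ i x ≤ φ x) (heq : ∀ x, ∃ i, φ x = ψ i x) : IsGood ν C a φ := by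
  rintro x₀ k η ε hη hε hε' ⟨x, hx, hηx⟩
  obtain ⟨i, hi⟩ := heq x
  refine (measure_mono ?_).trans (hψ i x₀ k hη hε hε' ⟨x, hx, hi ▸ hηx⟩)
  exact fun y hy ↦ ⟨hy.1, (hle i y).trans_lt hy.2⟩

theorem mono (h : IsGood ν C a φ) {C' a' : ℝ} (hC : C ≤ C') (hC' : 0 ≤ C') (ha : a' ≤ a) :
    IsGood ν C' a' φ := by
  intro x₀ k η ε hη hε hε' hx
  refine (h x₀ k hη hε hε' hx).trans ?_
  have hpow : ε ^ a ≤ ε ^ a' := Real.rpow_le_rpow_of_exponent_ge hε hε' ha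
  gcongr

end IsGood

section Series

variable {g : ℕ → ℚ_[p]} (hg : Tendsto g atTop (𝓝 0))
include hg

theorem le_mul_norm_evalSeries_diffQuot {x z : ℤ_[p]} {r η : ℝ} (hxz : ‖x - z‖ ≤ r)
    (hz : ‖evalSeries g z‖ < η) (hx : η ≤ ‖evalSeries g x‖) :
    η ≤ r * ‖evalSeries (diffQuot g z) x‖ := by
  have hlt := hz.trans_le hx
  have hnorm : ‖x - z‖ * ‖evalSeries (diffQuot g z) x‖ = ‖evalSeries g x‖ := by
    rw [← PadicInt.padic_norm_e_of_padicInt, PadicInt.coe_sub, ← norm_mul,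
      ← evalSeries_sub_evalSeries hg, sub_eq_add_neg,
      IsUltrametricDist.norm_add_eq_max_of_norm_ne_norm (by rw [norm_neg]; exact hlt.ne'), norm_neg,
      max_eq_left hlt.le]
  calc η ≤ ‖x - z‖ * ‖evalSeries (diffQuot g z) x‖ := hnorm ▸ hx
    _ ≤ r * ‖evalSeries (diffQuot g z) x‖ := by gcongr

theorem norm_sub_lt_or_norm_evalSeries_diffQuot_lt {x z : ℤ_[p]} {s s' : ℝ} (hs' : 0 ≤ s')
    (hz : ‖evalSeries g z‖ < s * s') (hx : ‖evalSeries g x‖ < s * s') :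
    ‖x - z‖ < s ∨ ‖evalSeries (diffQuot g z) x‖ < s' := by
  have hlt : ‖x - z‖ * ‖evalSeries (diffQuot g z) x‖ < s * s' := by
    rw [← PadicInt.padic_norm_e_of_padicInt, PadicInt.coe_sub, ← norm_mul,
      ← evalSeries_sub_evalSeries hg, sub_eq_add_neg]
    exact (IsUltrametricDist.norm_add_le_max _ _).trans_lt (max_lt hx (by rwa [norm_neg]))
  by_contra! hge
  exact absurd hlt (not_lt.2 (mul_le_mul hge.1 hge.2 hs' (norm_nonneg _)))

variable (ν : Measure ℤ_[p]) [ν.IsAddHaarMeasure]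

/-- If `|g|` is small at `z` and at `x`, then `x` is close to `z` or the difference quotient is
small at `x`; the smallness `ε` is shared equally between the two events. -/
theorem isGood_norm_evalSeries_of_diffQuot {C a : ℝ} (hC : 0 ≤ C) (ha : a ≤ 1)
    (h : ∀ z, IsGood ν C a fun x ↦ ‖evalSeries (diffQuot g z) x‖) :
    IsGood ν (p + C) (a / 2) fun x ↦ ‖evalSeries g x‖ := by
  rintro x₀ k η ε hη hε hε' ⟨x, hx, hηx⟩
  obtain hempty | ⟨z, hz, hzε⟩ :=
    Set.eq_empty_or_nonempty {x ∈ padicBall x₀ k | ‖evalSeries g x‖ < ε * η}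
  · simp [hempty]
  have hp := (Fact.out : p.Prime).pos
  set r : ℝ := (p : ℝ) ^ (-(k : ℤ))
  have hr : 0 < r := by positivity
  set δ : ℝ := √ε
  have hδ : 0 < δ := Real.sqrt_pos.2 hε
  have hδ' : δ ≤ 1 := Real.sqrt_le_one.2 hε'
  have hsplit : ε * η = δ * r * (δ * (η / r)) := by
    rw [mul_mul_mul_comm, Real.mul_self_sqrt hε.le, mul_div_cancel₀ _ hr.ne']
  have hball := padicBall_eq_of_mem hz
  have hquot : η / r ≤ ‖evalSeries (diffQuot g z) x‖ := by
    rw [div_le_iff₀' hr]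
    exact le_mul_norm_evalSeries_diffQuot hg (mem_padicBall.1 (hball ▸ hx))
      (hzε.trans_le (mul_le_of_le_one_left hη.le hε')) hηx
  have hcover : {x ∈ padicBall x₀ k | ‖evalSeries g x‖ < ε * η} ⊆ {x | ‖x - z‖ < δ * r} ∪
      {x ∈ padicBall x₀ k | ‖evalSeries (diffQuot g z) x‖ < δ * (η / r)} := fun y hy ↦
    (norm_sub_lt_or_norm_evalSeries_diffQuot_lt hg (by positivity)
      (hsplit ▸ hzε) (hsplit ▸ hy.2)).imp_right fun hlt ↦ ⟨hy.1, hlt⟩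
  have hδpow : δ ^ a = ε ^ (a / 2) := by
    rw [show δ = ε ^ (1 / 2 : ℝ) from Real.sqrt_eq_rpow ε, ← Real.rpow_mul hε.le,
      one_div_mul_eq_div]
  have hδle : δ ≤ ε ^ (a / 2) := hδpow ▸ Real.self_le_rpow_of_le_one hδ.le hδ' ha
  calc ν {x ∈ padicBall x₀ k | ‖evalSeries g x‖ < ε * η}
    _ ≤ ENNReal.ofReal (p * δ) * ν (padicBall x₀ k) +
        ENNReal.ofReal (C * δ ^ a) * ν (padicBall x₀ k) := by
      refine (measure_mono hcover).trans ((measure_union_le _ _).trans (add_le_add ?_ ?_))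
      · exact hball ▸ measure_norm_sub_lt_le ν z k hδ hδ'
      · exact h z x₀ k (div_pos hη hr) hδ hδ' ⟨x, hx, hquot⟩
    _ = ENNReal.ofReal (p * δ + C * δ ^ a) * ν (padicBall x₀ k) := by
      rw [← add_mul, ENNReal.ofReal_add (by positivity) (by positivity)]
    _ ≤ ENNReal.ofReal ((p + C) * ε ^ (a / 2)) * ν (padicBall x₀ k) := by
      rw [add_mul, hδpow]
      gcongr

theorem IsWeierstrassDegree.isGood {j : ℕ} (h : IsWeierstrassDegree g j) :
    IsGood ν (j * p) ((1 / 2) ^ j) fun x ↦ ‖evalSeries g x‖ := by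
  induction j generalizing g with
  | zero =>
    have hconst (x : ℤ_[p]) : ‖evalSeries g x‖ = ‖g 0‖ := h.norm_tailEval hg x
    simpa only [hconst] using .const ‖g 0‖
  | succ j ih =>
    have hstep := isGood_norm_evalSeries_of_diffQuot hg ν (by positivity)
      (pow_le_one₀ (by norm_num) (by norm_num))
      fun z ↦ ih (tendsto_diffQuot hg z) (h.isWeierstrassDegree_diffQuot hg z)
    convert hstep using 1
    · push_cast
      ring
    · ring

end Series

theorem exists_isWeierstrassDegree_le {g : ℕ → ℚ_[p]} {N k : ℕ} (hk : k ≤ N)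
    (h : ∀ l, N < l → ‖g l‖ < ‖g k‖) : ∃ j ≤ N, IsWeierstrassDegree g j := by
  obtain ⟨j, hjN, hmax⟩ := Finset.exists_max_image (Finset.range (N + 1))
    (fun l ↦ toLex (‖g l‖, l)) ⟨0, by simp⟩
  simp only [Finset.mem_range, Order.lt_add_one_iff, Prod.Lex.toLex_le_toLex] at hjN hmax
  have hkj : ‖g k‖ ≤ ‖g j‖ := (hmax k hk).elim le_of_lt fun h ↦ h.1.le
  have hlt (i : ℕ) (hi : N < i) : ‖g i‖ < ‖g j‖ := (h i hi).trans_le hkj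
  refine ⟨j, hjN, norm_pos_iff.1 ((norm_nonneg _).trans_lt (hlt (N + 1) N.lt_succ_self)), ?_, ?_⟩
  · intro i
    obtain hi | hi := le_or_gt i N
    · exact (hmax i hi).elim le_of_lt fun h ↦ h.1.le
    · exact (hlt i hi).le
  · intro i hji
    obtain hi | hi := le_or_gt i N
    · exact (hmax i hi).resolve_right fun h ↦ hji.not_ge h.2
    · exact hlt i hi

section Combinations

variable {ι : Type*} [Fintype ι]

theorem exists_norm_le_mul_norm_sum_smul_apply {K : Type*} [NontriviallyNormedField K]
    [CompleteSpace K] {f : ι → ℕ → K} (hli : LinearIndependent K f) :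
    ∃ (N : ℕ) (C : ℝ), 0 < C ∧ ∀ c : ι → K, ∃ k ≤ N, ‖c‖ ≤ C * ‖(∑ i, c i • f i) k‖ := by
  let T (N : ℕ) : (ι → K) →ₗ[K] (Fin (N + 1) → K) :=
    LinearMap.funLeft K K Fin.val ∘ₗ Fintype.linearCombination K f
  have hker : Antitone fun N ↦ LinearMap.ker (T N) := fun N N' hN c hc ↦ by
    ext k
    exact congrFun hc (Fin.castLE (by lia) k)
  obtain ⟨N, hN⟩ : ∃ N, ∀ m, N ≤ m → LinearMap.ker (T N) = LinearMap.ker (T m) :=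
    IsArtinian.monotone_stabilizes ⟨_, hker.dual_right⟩
  have hinj : LinearMap.ker (T N) = ⊥ := by
    refine LinearMap.ker_eq_bot'.2 fun c hc ↦ ?_
    have hzero : Fintype.linearCombination K f c = 0 := by
      ext k
      have hmem : c ∈ LinearMap.ker (T (max N k)) := hN _ (le_max_left N k) ▸ LinearMap.mem_ker.2 hc
      exact congrFun hmem (⟨k, by lia⟩ : Fin (max N k + 1))
    exact funext (Fintype.linearIndependent_iff.1 hli c hzero)
  obtain ⟨C, hC, hT⟩ := (T N).exists_antilipschitzWith hinj
  refine ⟨N, C, hC, fun c ↦ ?_⟩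
  by_contra! hlt
  have hc : 0 < ‖c‖ := (by positivity : (0 : ℝ) ≤ _).trans_lt (hlt 0 (Nat.zero_le N))
  have hTlt : ‖T N c‖ < ‖c‖ / C := (pi_norm_lt_iff (div_pos hc hC)).2 fun k ↦ by
    rw [lt_div_iff₀' (by exact_mod_cast hC)]
    exact hlt k (by lia)
  rw [lt_div_iff₀' (by exact_mod_cast hC)] at hTlt
  exact hTlt.not_ge (by simpa using hT.le_mul_dist c 0)

variable {f : ι → ℕ → ℚ_[p]} (hf : ∀ i, Tendsto (f i) atTop (𝓝 0))
include hf

theorem exists_isWeierstrassDegree_sum_smul_of_linearIndependent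
    (hli : LinearIndependent ℚ_[p] f) :
    ∃ N, ∀ c : ι → ℚ_[p], c ≠ 0 → ∃ j ≤ N, IsWeierstrassDegree (∑ i, c i • f i) j := by
  obtain ⟨N, C, hC, hle⟩ := exists_norm_le_mul_norm_sum_smul_apply hli
  obtain ⟨N', hN'⟩ : ∃ N', ∀ l ≥ N', ∀ i, ‖f i l‖ < 1 / C :=
    Filter.eventually_atTop.1 <| Filter.eventually_all.2 fun i ↦
      (tendsto_zero_iff_norm_tendsto_zero.1 (hf i)).eventually_lt_const (by positivity)
  refine ⟨max N N', fun c hc ↦ ?_⟩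
  have hc' : 0 < ‖c‖ := norm_pos_iff.2 hc
  obtain ⟨k, hkN, hk⟩ := hle c
  refine exists_isWeierstrassDegree_le (hkN.trans (le_max_left N N')) fun l hl ↦ ?_
  have hterm (i : ι) : ‖c i * f i l‖ < ‖c‖ / C := by
    rw [norm_mul, div_eq_mul_one_div]
    exact mul_lt_mul' (norm_le_pi_norm c i) (hN' l (by lia) i) (norm_nonneg _) hc'
  calc ‖(∑ i, c i • f i) l‖ = ‖∑ i, c i * f i l‖ := by simp
    _ < ‖c‖ / C := by
      obtain ⟨i, -⟩ := Function.ne_iff.1 hc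
      have : Nonempty ι := ⟨i⟩
      obtain ⟨i, -, hi⟩ :=
        IsUltrametricDist.exists_norm_finsetSum_le Finset.univ fun i ↦ c i * f i l
      exact hi.trans_lt (hterm i)
    _ ≤ ‖(∑ i, c i • f i) k‖ := (div_le_iff₀' hC).2 hk

theorem exists_isWeierstrassDegree_sum_smul :
    ∃ N, ∀ c : ι → ℚ_[p],
      ∑ i, c i • f i = 0 ∨ ∃ j ≤ N, IsWeierstrassDegree (∑ i, c i • f i) j := by
  have : Module.Finite ℚ_[p] (Submodule.span ℚ_[p] (Set.range f)) :=
    Module.Finite.span_of_finite ℚ_[p] (Set.finite_range f)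
  obtain ⟨g, hg, hspan, hli⟩ := Submodule.exists_fun_fin_finrank_span_eq ℚ_[p] (Set.range f)
  obtain ⟨N, hN⟩ := exists_isWeierstrassDegree_sum_smul_of_linearIndependent
    (fun i ↦ (hg i).elim fun k hk ↦ hk ▸ hf k) hli
  refine ⟨N, fun c ↦ ?_⟩
  have hmem : ∑ i, c i • f i ∈ Submodule.span ℚ_[p] (Set.range g) :=
    hspan.symm ▸ (Submodule.span ℚ_[p] (Set.range f)).sum_mem fun i _ ↦
      Submodule.smul_mem _ _ (Submodule.subset_span ⟨i, rfl⟩)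
  obtain ⟨c', hc'⟩ := (Submodule.mem_span_range_iff_exists_fun _).1 hmem
  rw [← hc']
  obtain rfl | hc := eq_or_ne c' 0
  · simp
  · exact Or.inr (hN c' hc)

theorem tendsto_sum_smul (c : ι → ℚ_[p]) : Tendsto (∑ i, c i • f i) atTop (𝓝 0) := by
  have hsum := tendsto_finsetSum Finset.univ fun i _ ↦ (hf i).const_mul (c i)
  simp only [mul_zero, Finset.sum_const_zero] at hsum
  exact hsum.congr fun k ↦ by simp

theorem evalSeries_sum_smul (c : ι → ℚ_[p]) (x : ℤ_[p]) :
    evalSeries (∑ i, c i • f i) x = ∑ i, c i * evalSeries (f i) x := by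
  simp only [evalSeries, ← tsum_mul_left]
  rw [← Summable.tsum_finsetSum fun i _ ↦ (summable_mul_coe_pow (hf i) x).mul_left _]
  simp only [Finset.sum_apply, Pi.smul_apply, smul_eq_mul, Finset.sum_mul, mul_assoc]

theorem exists_isGood_norm_sum_mul_evalSeries (ν : Measure ℤ_[p]) [ν.IsAddHaarMeasure] :
    ∃ C a : ℝ, 0 < C ∧ 0 < a ∧
      ∀ c : ι → ℚ_[p], IsGood ν C a fun x ↦ ‖∑ i, c i * evalSeries (f i) x‖ := by
  obtain ⟨N, hN⟩ := exists_isWeierstrassDegree_sum_smul hf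
  have hp := (Fact.out : p.Prime).pos
  refine ⟨(N + 1) * p, (1 / 2) ^ N, by positivity, by positivity, fun c ↦ ?_⟩
  simp only [← evalSeries_sum_smul hf c]
  obtain hzero | ⟨j, hjN, hj⟩ := hN c
  · have hnorm (x : ℤ_[p]) : ‖evalSeries (∑ i, c i • f i) x‖ = 0 := by
      rw [hzero]
      simp [evalSeries]
    simpa only [hnorm] using .const 0
  · have hjN' : (j : ℝ) ≤ N + 1 := by exact_mod_cast hjN.trans N.le_succ
    exact (hj.isGood (tendsto_sum_smul hf c) ν).mono (by gcongr) (by positivity)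
      (pow_le_pow_of_le_one (by norm_num) (by norm_num) hjN)

end Combinations

end GoodFunctions

section Nondivergence

theorem exists_pairwiseDisjoint_padicBall_cover {A : Set ℤ_[p]} {x₀ : ℤ_[p]} {k : ℕ}
    {P : Set ℤ_[p] → Prop} (hA : A ⊆ padicBall x₀ k)
    (h : ∀ x ∈ A, ∃ l, k ≤ l ∧ P (padicBall x l)) :
    ∃ D : Set (Set ℤ_[p]), D.Countable ∧ D.PairwiseDisjoint id ∧ A ⊆ ⋃₀ D ∧
      ∀ b ∈ D, IsOpen b ∧ b ⊆ padicBall x₀ k ∧ P b := by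
  classical
  have hmin (x) (hx : x ∈ A) : ∃ l, (k ≤ l ∧ P (padicBall x l)) ∧
      ∀ m, k ≤ m ∧ P (padicBall x m) → l ≤ m :=
    ⟨Nat.find (h x hx), Nat.find_spec (h x hx), fun m ↦ Nat.find_min' (h x hx)⟩
  choose! l hl hlmin using hmin
  have heq {x y} (hx : x ∈ A) (hy : y ∈ A) (hxy : l x ≤ l y)
      (hne : (padicBall x (l x) ∩ padicBall y (l y)).Nonempty) :
      padicBall x (l x) = padicBall y (l y) := by
    obtain ⟨w, hwx, hwy⟩ := hne
    have hball : padicBall x (l x) = padicBall y (l x) :=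
      (padicBall_eq_of_mem hwx).trans (padicBall_eq_of_mem (padicBall_anti y hxy hwy)).symm
    rw [hball, hxy.antisymm (hlmin y hy _ (hball ▸ hl x hx))]
  let D : Set (Set ℤ_[p]) := (fun x ↦ padicBall x (l x)) '' A
  have hdisj : D.PairwiseDisjoint id := by
    rintro _ ⟨x, hx, rfl⟩ _ ⟨y, hy, rfl⟩ hne
    refine Set.disjoint_iff_inter_eq_empty.2 (Set.not_nonempty_iff_eq_empty.1 fun hmeet ↦ hne ?_)
    obtain hxy | hxy := le_total (l x) (l y)
    · exact heq hx hy hxy hmeet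
    · exact (heq hy hx hxy (Set.inter_comm _ _ ▸ hmeet)).symm
  have hD : ∀ b ∈ D, IsOpen b ∧ b ⊆ padicBall x₀ k ∧ P b := Set.forall_mem_image.2 fun x hx ↦
    ⟨isOpen_padicBall x (l x),
      (padicBall_anti x (hl x hx).1).trans (padicBall_eq_of_mem (hA hx)).superset, (hl x hx).2⟩
  refine ⟨D, hdisj.countable_of_isOpen (fun b hb ↦ (hD b hb).1) ?_, hdisj, fun x hx ↦ ?_, hD⟩
  · exact Set.forall_mem_image.2 fun x _ ↦ ⟨x, self_mem_padicBall x (l x)⟩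
  · exact ⟨_, Set.mem_image_of_mem _ hx, self_mem_padicBall x (l x)⟩

theorem measure_le_mul_of_forall_exists_padicBall {ν : Measure ℤ_[p]} {A : Set ℤ_[p]} {x₀ : ℤ_[p]}
    {k : ℕ} {c : ℝ≥0∞} (hA : A ⊆ padicBall x₀ k)
    (h : ∀ x ∈ A, ∃ l, k ≤ l ∧ ν (A ∩ padicBall x l) ≤ c * ν (padicBall x l)) :
    ν A ≤ c * ν (padicBall x₀ k) := by
  obtain ⟨D, hcount, hdisj, hcover, hD⟩ :=
    exists_pairwiseDisjoint_padicBall_cover (P := fun b ↦ ν (A ∩ b) ≤ c * ν b) hA h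
  have hcover' : A ⊆ ⋃ b ∈ D, A ∩ b := by
    rw [← Set.inter_iUnion₂, ← Set.sUnion_eq_biUnion]
    exact Set.subset_inter subset_rfl hcover
  have hsub : ⋃ b ∈ D, id b ⊆ padicBall x₀ k := Set.iUnion₂_subset fun b hb ↦ (hD b hb).2.1
  calc ν A ≤ ∑' b : D, ν (A ∩ b) := (measure_mono hcover').trans (measure_biUnion_le ν hcount _)
    _ ≤ ∑' b : D, c * ν b := ENNReal.tsum_le_tsum fun b ↦ (hD b b.2).2.2
    _ = c * ν (⋃ b ∈ D, id b) := by
      rw [ENNReal.tsum_mul_left, measure_biUnion hcount hdisj fun b hb ↦ (hD b hb).1.measurableSet]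
      rfl
    _ ≤ c * ν (padicBall x₀ k) := by gcongr

variable {S : Type*} [PartialOrder S]

/-- The element `s` can be added to the chain `F`. -/
def ExtendsChain (F : Finset S) (s : S) : Prop := s ∉ F ∧ ∀ t ∈ F, s ≤ t ∨ t ≤ s

theorem ExtendsChain.isChain_insert [DecidableEq S] {F : Finset S} {s : S} (h : ExtendsChain F s)
    (hF : IsChain (· ≤ ·) (F : Set S)) : IsChain (· ≤ ·) ((insert s F : Finset S) : Set S) := by
  rw [Finset.coe_insert]
  exact hF.insert fun t ht _ ↦ h.2 t ht

theorem ExtendsChain.of_insert [DecidableEq S] {F : Finset S} {s t : S}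
    (h : ExtendsChain (insert s F) t) : ExtendsChain F t :=
  ⟨fun ht ↦ h.1 (Finset.mem_insert_of_mem ht), fun u hu ↦ h.2 u (Finset.mem_insert_of_mem hu)⟩

/-- The marked points of Kleinbock and Margulis, for a family `φ` of functions indexed by a poset:
on the chain `F` the functions lie between `ε` and `1` at `x`, and no function indexed by an element
extending `F` is smaller than `1` at `x`. -/
structure IsMarkedBy (φ : S → ℤ_[p] → ℝ) (ε : ℝ) (F : Finset S) (x : ℤ_[p]) : Prop where
  isChain : IsChain (· ≤ ·) (F : Set S)
  mem_Icc : ∀ s ∈ F, φ s x ∈ Set.Icc ε 1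
  one_le : ∀ s, ExtendsChain F s → 1 ≤ φ s x

/-- The points which no chain marks, although `F` satisfies the first condition for marking them;
the chain `F` grows in the inductive estimate of the measure of unmarked points. -/
def unmarkedSet (φ : S → ℤ_[p] → ℝ) (ε : ℝ) (F : Finset S) : Set ℤ_[p] :=
  {x | (∀ s ∈ F, φ s x ∈ Set.Icc ε 1) ∧ ∀ F', ¬IsMarkedBy φ ε F' x}

variable {φ : S → ℤ_[p] → ℝ} {ε : ℝ} {F : Finset S} {x₀ : ℤ_[p]} {k : ℕ}

theorem exists_padicBall_forall_lt_one (hopen : ∀ s, IsOpen {x | φ s x < 1})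
    (hF : IsChain (· ≤ ·) (F : Set S))
    (hsup : ∀ s, ExtendsChain F s → ∃ y ∈ padicBall x₀ k, 1 ≤ φ s y) {x : ℤ_[p]}
    (hx : x ∈ unmarkedSet φ ε F) (hxk : x ∈ padicBall x₀ k) :
    ∃ j, k ≤ j ∧ (∃ s, ExtendsChain F s ∧ ∀ y ∈ padicBall x (j + 1), φ s y < 1) ∧
      ∀ s, ExtendsChain F s → ∃ y ∈ padicBall x j, 1 ≤ φ s y := by
  classical
  obtain ⟨s, hs, hsx⟩ : ∃ s, ExtendsChain F s ∧ φ s x < 1 := by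
    by_contra! hge
    exact hx.2 F ⟨hF, hx.1, hge⟩
  obtain ⟨i, hi⟩ := exists_padicBall_subset (hopen s) hsx
  have hex : ∃ i, ∃ s, ExtendsChain F s ∧ ∀ y ∈ padicBall x i, φ s y < 1 := ⟨i, s, hs, hi⟩
  have hlt : k < Nat.find hex := by
    by_contra! hle
    obtain ⟨t, ht, htlt⟩ := Nat.find_spec hex
    obtain ⟨y, hy, hyt⟩ := hsup t ht
    rw [padicBall_eq_of_mem hxk] at hy
    exact (htlt y (padicBall_anti x hle hy)).not_ge hyt
  refine ⟨Nat.find hex - 1, by lia, ?_, fun t ht ↦ ?_⟩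
  · rw [Nat.sub_add_cancel (by lia)]
    exact Nat.find_spec hex
  · by_contra! hlt'
    exact Nat.find_min hex (Nat.sub_lt (by lia) one_pos) ⟨t, ht, hlt'⟩

variable {ν : Measure ℤ_[p]} [ν.IsAddHaarMeasure] {C a : ℝ} (hε : 0 < ε) (hε' : ε ≤ 1)
  (hgood : ∀ s, IsGood ν C a (φ s)) (hopen : ∀ s, IsOpen {x | φ s x < 1})
include hε hε' hgood hopen

theorem measure_unmarkedSet_inter_padicBall_le_of_insert [DecidableEq S] {K : ℝ≥0∞}
    (hF : IsChain (· ≤ ·) (F : Set S))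
    (hsup : ∀ s, ExtendsChain F s → ∃ y ∈ padicBall x₀ k, 1 ≤ φ s y)
    (hK : ∀ s x j, ExtendsChain F s →
      (∀ t, ExtendsChain (insert s F) t → ∃ y ∈ padicBall x j, 1 ≤ φ t y) →
      ν (unmarkedSet φ ε (insert s F) ∩ padicBall x j) ≤ K * ν (padicBall x j)) :
    ν (unmarkedSet φ ε F ∩ padicBall x₀ k) ≤
      p * (ENNReal.ofReal (C * ε ^ a) + K) * ν (padicBall x₀ k) := by
  refine measure_le_mul_of_forall_exists_padicBall Set.inter_subset_right fun x hx ↦ ?_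
  obtain ⟨j, hkj, ⟨s, hs, hlt⟩, hsup'⟩ := exists_padicBall_forall_lt_one hopen hF hsup hx.1 hx.2
  have hcover : unmarkedSet φ ε F ∩ padicBall x₀ k ∩ padicBall x (j + 1) ⊆
      {y ∈ padicBall x j | φ s y < ε * 1} ∪ unmarkedSet φ ε (insert s F) ∩ padicBall x j := by
    rintro y ⟨⟨hy, -⟩, hyj⟩
    have hyj' : y ∈ padicBall x j := padicBall_anti x j.le_succ hyj
    obtain hsy | hsy := lt_or_ge (φ s y) ε
    · exact Or.inl ⟨hyj', by rwa [mul_one]⟩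
    · exact Or.inr ⟨⟨Finset.forall_mem_insert _ _ _ |>.2 ⟨⟨hsy, (hlt y hyj).le⟩, hy.1⟩, hy.2⟩, hyj'⟩
  refine ⟨j + 1, by lia, ?_⟩
  calc ν (unmarkedSet φ ε F ∩ padicBall x₀ k ∩ padicBall x (j + 1))
    _ ≤ ν {y ∈ padicBall x j | φ s y < ε * 1} + ν (unmarkedSet φ ε (insert s F) ∩ padicBall x j) :=
      (measure_mono hcover).trans (measure_union_le _ _)
    _ ≤ ENNReal.ofReal (C * ε ^ a) * ν (padicBall x j) + K * ν (padicBall x j) :=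
      add_le_add (hgood s x j one_pos hε hε' (hsup' s hs))
        (hK s x j hs fun t ht ↦ hsup' t ht.of_insert)
    _ = p * (ENNReal.ofReal (C * ε ^ a) + K) * ν (padicBall x (j + 1)) := by
      rw [measure_padicBall_eq_pow_mul ν x j 1]
      ring

variable {m : ℕ} (hcard : ∀ F : Finset S, IsChain (· ≤ ·) (F : Set S) → F.card ≤ m)
include hcard

theorem measure_unmarkedSet_inter_padicBall_le {l : ℕ} (hF : IsChain (· ≤ ·) (F : Set S))
    (hFl : F.card + l = m) (hsup : ∀ s, ExtendsChain F s → ∃ y ∈ padicBall x₀ k, 1 ≤ φ s y) :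
    ν (unmarkedSet φ ε F ∩ padicBall x₀ k) ≤
      l * p ^ l * ENNReal.ofReal (C * ε ^ a) * ν (padicBall x₀ k) := by
  classical
  induction l generalizing F x₀ k with
  | zero =>
    have hempty : unmarkedSet φ ε F = ∅ := by
      refine Set.eq_empty_of_forall_notMem fun x hx ↦ hx.2 F ⟨hF, hx.1, fun s hs ↦ ?_⟩
      have hle := hcard _ (hs.isChain_insert hF)
      rw [Finset.card_insert_of_notMem hs.1] at hle
      lia
    simp [hempty]
  | succ l ih =>
    refine (measure_unmarkedSet_inter_padicBall_le_of_insert hε hε' hgood hopen hF hsup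
      fun s x j hs hsup' ↦ ih (hs.isChain_insert hF)
        (by rw [Finset.card_insert_of_notMem hs.1]; lia) hsup').trans ?_
    have hp : (1 : ℝ≥0∞) ≤ p ^ l := one_le_pow₀ (mod_cast (Fact.out : p.Prime).one_le)
    calc p * (ENNReal.ofReal (C * ε ^ a) + l * p ^ l * ENNReal.ofReal (C * ε ^ a)) *
          ν (padicBall x₀ k)
      _ = (1 + l * p ^ l) * p * ENNReal.ofReal (C * ε ^ a) * ν (padicBall x₀ k) := by ring
      _ ≤ (p ^ l + l * p ^ l) * p * ENNReal.ofReal (C * ε ^ a) * ν (padicBall x₀ k) := by gcongr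
      _ = (l + 1 : ℕ) * p ^ (l + 1) * ENNReal.ofReal (C * ε ^ a) * ν (padicBall x₀ k) := by
        push_cast
        ring

theorem measure_forall_not_isMarkedBy_le (hsup : ∀ s, ∃ x, 1 ≤ φ s x) :
    ν {x | ∀ F, ¬IsMarkedBy φ ε F x} ≤
      m * p ^ m * ENNReal.ofReal (C * ε ^ a) * ν Set.univ := by
  have h := measure_unmarkedSet_inter_padicBall_le hε hε' hgood hopen hcard (F := ∅) (x₀ := 0)
    (k := 0) (l := m) (by simp) (by simp) fun s _ ↦ by simpa [padicBall_zero] using hsup s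
  simpa [unmarkedSet, padicBall_zero] using h

end Nondivergence

section CurveNondivergence

open Filter Topology

variable {ι : Type*} [Fintype ι]

/-- A `ℤ`-basis of `V ∩ ℤ^ι`. -/
noncomputable def intBasis (V : Submodule ℚ (ι → ℚ)) : Matrix (Fin (Module.finrank ℚ V)) ι ℤ :=
  (exists_isIntBasis V).choose

theorem isIntBasis_intBasis (V : Submodule ℚ (ι → ℚ)) : IsIntBasis V (intBasis V) :=
  (exists_isIntBasis V).choose_spec

/-- The covolume attached to the lattice `V ∩ ℤ^ι`, in units of the scale `ρ`. -/
noncomputable def normCovol (t : ℕ) (ρ : ℝ) (Y : ι → ℚ_[p]) (V : Submodule ℚ (ι → ℚ)) : ℝ :=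
  covol t Y (intBasis V) / ρ ^ Module.finrank ℚ V

theorem normCovol_bot (t : ℕ) (ρ : ℝ) (Y : ι → ℚ_[p]) : normCovol t ρ Y ⊥ = 1 := by
  have : IsEmpty (Fin (Module.finrank ℚ (⊥ : Submodule ℚ (ι → ℚ)))) := by
    rw [finrank_bot]
    infer_instance
  rw [normCovol, covol_of_isEmpty, finrank_bot, pow_zero, div_one]

theorem continuous_normCovol {X : Type*} [TopologicalSpace X] (t : ℕ) (ρ : ℝ) {Y : X → ι → ℚ_[p]}
    (hY : Continuous Y) (V : Submodule ℚ (ι → ℚ)) : Continuous fun x ↦ normCovol t ρ (Y x) V :=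
  (continuous_const.mul (continuous_formIndex t hY _)).div_const _

theorem isGood_normCovol {ν : Measure ℤ_[p]} {C a : ℝ} {Y : ℤ_[p] → ι → ℚ_[p]}
    (hY : ∀ z : ι → ℤ, IsGood ν C a fun x ↦ ‖linForm (Y x) z‖) (t : ℕ) {ρ : ℝ} (hρ : 0 < ρ)
    (V : Submodule ℚ (ι → ℚ)) : IsGood ν C a fun x ↦ normCovol t ρ (Y x) V := by
  have hp := (Fact.out : p.Prime).pos
  have hminor : 0 < maxMinor (intBasis V) :=
    Nat.pos_of_ne_zero (isIntBasis_intBasis V).maxMinor_ne_zero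
  let ψ : Option (Fin (Module.finrank ℚ V)) → ℤ_[p] → ℝ := fun o x ↦
    o.elim 1 fun i ↦ (p : ℝ) ^ t * ‖linForm (Y x) (intBasis V i)‖
  have hindex : IsGood ν C a fun x ↦ formIndex t (Y x) (intBasis V) := by
    refine .of_forall_exists_eq (ψ := ψ) (Option.forall.2 ⟨.const 1, fun i ↦ ?_⟩)
      (Option.forall.2 ⟨fun x ↦ one_le_formIndex t (Y x) _, fun i x ↦ ?_⟩) fun x ↦ ?_
    · exact (hY (intBasis V i)).const_mul (by positivity)
    · exact pow_mul_norm_linForm_le_formIndex t (Y x) _ i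
    · exact Option.exists.2 (formIndex_eq_one_or_exists t (Y x) (intBasis V))
  have hscaled := hindex.const_mul (c := maxMinor (intBasis V) / ρ ^ Module.finrank ℚ V)
    (by positivity)
  simpa only [normCovol, covol, mul_div_right_comm] using hscaled

theorem one_le_normCovol [Nonempty ι] {t : ℕ} {Y : ι → ℚ_[p]} {R : ℝ} (hR : 0 < R)
    (hY : ∀ z : ι → ℤ, z ≠ 0 → (p : ℝ) ^ t * ‖linForm Y z‖ ≤ 1 → R ≤ ‖z‖)
    {V : Submodule ℚ (ι → ℚ)} (hV : V ≠ ⊥) : 1 ≤ normCovol t (R / Fintype.card ι) Y V := by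
  have hrank : 0 < Module.finrank ℚ V := Nat.pos_of_ne_zero (mt Submodule.finrank_eq_zero.1 hV)
  have hle : Module.finrank ℚ V ≤ Fintype.card ι :=
    (Submodule.finrank_le V).trans_eq (Module.finrank_fintype_fun_eq_card ℚ)
  have : NeZero (Module.finrank ℚ V) := ⟨hrank.ne'⟩
  have hcovol := div_card_pow_card_le_covol (isIntBasis_intBasis V).maxMinor_ne_zero hR.le hY
  rw [Fintype.card_fin] at hcovol
  rw [normCovol, one_le_div (by positivity)]
  exact le_trans (by gcongr) hcovol

theorem exists_mem_forall_sup_span_singleton_le_or_le {R M : Type*} [Semiring R]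
    [AddCommMonoid M] [Module R M] {F : Finset (Submodule R M)}
    (hF : IsChain (· ≤ ·) (F : Set (Submodule R M))) {v : M} (hv : ∃ V ∈ F, v ∉ V) :
    ∃ V ∈ F, v ∉ V ∧ ∀ W ∈ F, W ≤ V ⊔ Submodule.span R {v} ∨ V ⊔ Submodule.span R {v} ≤ W := by
  classical
  obtain ⟨V, hV⟩ := (F.filter fun V ↦ v ∉ V).exists_maximal (Finset.filter_nonempty_iff.2 hv)
  obtain ⟨hVF, hvV⟩ := Finset.mem_filter.1 hV.prop
  refine ⟨V, hVF, hvV, fun W hW ↦ ?_⟩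
  obtain hWV | hVW := hF.total hW hVF
  · exact Or.inl (hWV.trans le_sup_left)
  by_cases hvW : v ∈ W
  · exact Or.inr (sup_le hVW ((Submodule.span_singleton_le_iff_mem v W).2 hvW))
  · exact Or.inl ((hV.le_of_ge (Finset.mem_filter.2 ⟨hW, hvW⟩) hVW).trans le_sup_left)

/-- The nonzero rational subspaces, ordered by inclusion: they index the covolumes to which the
estimate on unmarked points is applied. -/
abbrev NonzeroSubspace (ι : Type*) := {V : Submodule ℚ (ι → ℚ) // V ≠ ⊥}

theorem NonzeroSubspace.card_le_of_isChain {F : Finset (NonzeroSubspace ι)}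
    (hF : IsChain (· ≤ ·) (F : Set (NonzeroSubspace ι))) : F.card ≤ Fintype.card ι := by
  have hmaps : Set.MapsTo (fun s : NonzeroSubspace ι ↦ Module.finrank ℚ s.1) F
      (Finset.Icc 1 (Fintype.card ι)) := fun s _ ↦ Finset.mem_coe.2 <| Finset.mem_Icc.2
    ⟨Nat.one_le_iff_ne_zero.2 (mt Submodule.finrank_eq_zero.1 s.2),
      (Submodule.finrank_le s.1).trans_eq (Module.finrank_fintype_fun_eq_card ℚ)⟩
  have hinj : Set.InjOn (fun s : NonzeroSubspace ι ↦ Module.finrank ℚ s.1) F := by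
    intro s hs s' hs' heq
    obtain hle | hle := hF.total hs hs'
    · exact Subtype.ext (Submodule.eq_of_le_of_finrank_eq hle heq)
    · exact Subtype.ext (Submodule.eq_of_le_of_finrank_eq hle heq.symm).symm
  simpa using Finset.card_le_card_of_injOn _ hmaps hinj

variable {t : ℕ} {ρ ε : ℝ}

theorem le_card_mul_norm_of_le_normCovol_sup {Y : ι → ℚ_[p]} (hρ : 0 < ρ)
    {V : Submodule ℚ (ι → ℚ)} {w : ι → ℤ} (hwV : intToRat ι w ∉ V)
    (hw : (p : ℝ) ^ t * ‖linForm Y w‖ ≤ 1) (hV : normCovol t ρ Y V ≤ 1)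
    (hVw : ε ≤ normCovol t ρ Y (V ⊔ Submodule.span ℚ {intToRat ι w})) :
    ε * ρ ≤ Fintype.card ι * ‖w‖ := by
  have hrank := Submodule.finrank_sup_span_singleton hwV
  have hle : (Module.finrank ℚ V : ℝ) + 1 ≤ Fintype.card ι := by
    exact_mod_cast hrank ▸
      (Submodule.finrank_le _).trans_eq (Module.finrank_fintype_fun_eq_card ℚ)
  rw [normCovol, div_le_one (by positivity)] at hV
  rw [normCovol, le_div_iff₀ (by positivity)] at hVw
  refine le_of_mul_le_mul_right ?_ (pow_pos hρ (Module.finrank ℚ V))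
  calc ε * ρ * ρ ^ Module.finrank ℚ V
      = ε * ρ ^ Module.finrank ℚ ↥(V ⊔ Submodule.span ℚ {intToRat ι w}) := by
        rw [hrank, pow_succ']
        ring
    _ ≤ (Module.finrank ℚ V + 1) * ‖w‖ * covol t Y (intBasis V) :=
      hVw.trans (covol_sup_span_singleton_le t Y hwV (isIntBasis_intBasis V)
        (isIntBasis_intBasis _) hw)
    _ ≤ Fintype.card ι * ‖w‖ * ρ ^ Module.finrank ℚ V :=
      mul_le_mul (by gcongr) hV (mul_nonneg (Nat.cast_nonneg _)
        (zero_le_one.trans (one_le_formIndex t Y _))) (by positivity)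

theorem IsMarkedBy.le_card_mul_norm {Y : ℤ_[p] → ι → ℚ_[p]} {F : Finset (NonzeroSubspace ι)}
    {x : ℤ_[p]} (h : IsMarkedBy (fun s x ↦ normCovol t ρ (Y x) s.1) ε F x) (hρ : 0 < ρ)
    (hε : ε ≤ 1) {w : ι → ℤ} (hw : w ≠ 0) (hwY : (p : ℝ) ^ t * ‖linForm (Y x) w‖ ≤ 1) :
    ε * ρ ≤ Fintype.card ι * ‖w‖ := by
  classical
  have hw' : intToRat ι w ≠ 0 := (map_ne_zero_iff _ (intToRat_injective ι)).2 hw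
  let G : Finset (Submodule ℚ (ι → ℚ)) := insert ⊥ (F.image Subtype.val)
  have hG : IsChain (· ≤ ·) (G : Set (Submodule ℚ (ι → ℚ))) := by
    rw [Finset.coe_insert, Finset.coe_image]
    exact ((Subtype.mono_coe _).isChain_image h.isChain).insert fun _ _ _ ↦ Or.inl bot_le
  obtain ⟨V, hVG, hwV, hcomp⟩ := exists_mem_forall_sup_span_singleton_le_or_le hG
    (v := intToRat ι w) ⟨⊥, Finset.mem_insert_self _ _, hw'⟩
  have hV : normCovol t ρ (Y x) V ≤ 1 := by
    obtain rfl | hVF := Finset.mem_insert.1 hVG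
    · exact (normCovol_bot t ρ (Y x)).le
    · obtain ⟨s, hs, rfl⟩ := Finset.mem_image.1 hVF
      exact (h.mem_Icc s hs).2
  have hwmem : intToRat ι w ∈ V ⊔ Submodule.span ℚ {intToRat ι w} :=
    Submodule.mem_sup_right (Submodule.mem_span_singleton_self _)
  let V' : NonzeroSubspace ι := ⟨V ⊔ Submodule.span ℚ {intToRat ι w},
    fun hbot ↦ hw' ((Submodule.mem_bot ℚ).1 (hbot ▸ hwmem))⟩
  refine le_card_mul_norm_of_le_normCovol_sup hρ hwV hwY hV ?_
  by_cases hV'F : V' ∈ F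
  · exact (h.mem_Icc V' hV'F).1
  · exact hε.trans <| h.one_le V' ⟨hV'F, fun s hs ↦
      (hcomp s.1 (Finset.mem_insert_of_mem (Finset.mem_image_of_mem _ hs))).symm⟩

theorem exists_measure_exists_small_linForm_le [Nonempty ι] (ν : Measure ℤ_[p])
    [ν.IsAddHaarMeasure] {f : ι → ℕ → ℚ_[p]} (hf : ∀ i, Tendsto (f i) atTop (𝓝 0)) :
    ∃ (K : ℝ≥0∞) (a : ℝ), K ≠ ∞ ∧ 0 < a ∧ ∀ (t : ℕ) ⦃R ε : ℝ⦄, 0 < R → 0 < ε → ε ≤ 1 →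
      (∀ z : ι → ℤ, z ≠ 0 → (p : ℝ) ^ t * ‖linForm (fun i ↦ evalSeries (f i) 0) z‖ ≤ 1 →
        R ≤ ‖z‖) →
      ν {x | ∃ z : ι → ℤ, z ≠ 0 ∧ (p : ℝ) ^ t * ‖linForm (fun i ↦ evalSeries (f i) x) z‖ ≤ 1 ∧
        Fintype.card ι ^ 2 * ‖z‖ < ε * R} ≤ K * ENNReal.ofReal (ε ^ a) := by
  obtain ⟨C, a, hC, ha, hgood⟩ := exists_isGood_norm_sum_mul_evalSeries hf ν
  set m := Fintype.card ι
  refine ⟨m * p ^ m * ENNReal.ofReal C * ν Set.univ, a, by finiteness, ha,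
    fun t R ε hR hε hε' hR0 ↦ ?_⟩
  set Y : ℤ_[p] → ι → ℚ_[p] := fun x i ↦ evalSeries (f i) x
  have hY : Continuous Y := continuous_pi fun i ↦ continuous_evalSeries (hf i)
  have hm : (0 : ℝ) < m := mod_cast Fintype.card_pos
  have hunmarked := measure_forall_not_isMarkedBy_le (ν := ν) (S := NonzeroSubspace ι)
    (φ := fun s x ↦ normCovol t (R / m) (Y x) s.1) hε hε'
    (fun s ↦ isGood_normCovol (fun z ↦ by simpa only [linForm_apply] using hgood fun i ↦ z i) t
      (by positivity) s.1)
    (fun s ↦ isOpen_lt (continuous_normCovol t _ hY s.1) continuous_const)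
    (fun F hF ↦ NonzeroSubspace.card_le_of_isChain hF)
    fun s ↦ ⟨0, one_le_normCovol hR hR0 s.2⟩
  refine (measure_mono ?_).trans (hunmarked.trans_eq ?_)
  · rintro x ⟨z, hz, hzY, hzR⟩ F hF
    have hle := hF.le_card_mul_norm (by positivity) hε' hz hzY
    rw [mul_div_assoc', div_le_iff₀ hm] at hle
    exact hzR.not_ge (hle.trans_eq (by ring))
  · rw [ENNReal.ofReal_mul hC.le]
    ring

end CurveNondivergence

section SupNorms

theorem iSup_norm_eq_pi_norm {ι E : Type*} [Fintype ι] [SeminormedAddGroup E] (f : ι → E) :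
    ⨆ i, ‖f i‖ = ‖f‖ := by
  cases isEmpty_or_nonempty ι
  · rw [Real.iSup_of_isEmpty, Pi.norm_def, Finset.univ_eq_empty, Finset.sup_empty]
    rfl
  · exact (IsGreatest.pi_norm f).csSup_eq

theorem supNormP_eq_norm {m : ℕ} (q : Fin m → ℚ) :
    supNormP p q = ‖fun i ↦ (q i : ℚ_[p])‖ :=
  iSup_norm_eq_pi_norm _

theorem supNormR_eq_norm {m : ℕ} (q : Fin m → ℚ) : supNormR q = ‖fun i ↦ (q i : ℝ)‖ :=
  iSup_norm_eq_pi_norm fun i ↦ (q i : ℝ)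

theorem supNormR_intCast {m : ℕ} (z : Fin m → ℤ) : supNormR (fun i ↦ (z i : ℚ)) = ‖z‖ := by
  simp only [supNormR_eq_norm, Rat.cast_intCast, Pi.norm_def]
  rfl

theorem supNormR_cons_intCast {n : ℕ} (z : Fin (n + 1) → ℤ) :
    supNormR (Fin.cons (z 0 : ℚ) fun i ↦ (z i.succ : ℚ)) = ‖z‖ := by
  rw [← supNormR_intCast]
  congr 1
  exact Fin.cons_self_tail fun i ↦ (z i : ℚ)

theorem norm_le_supNormP {m : ℕ} (q : Fin m → ℚ) (i : Fin m) :
    ‖(q i : ℚ_[p])‖ ≤ supNormP p q :=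
  (norm_le_pi_norm (fun i ↦ (q i : ℚ_[p])) i).trans_eq (supNormP_eq_norm q).symm

theorem exists_supNormP_eq {m : ℕ} {q : Fin m → ℚ} (hq : supNormP p q ≠ 0) :
    ∃ i, supNormP p q = ‖(q i : ℚ_[p])‖ := by
  have : Nonempty (Fin m) := by
    by_contra hm
    exact hq (@Real.iSup_of_isEmpty _ (not_nonempty_iff.1 hm) _)
  obtain ⟨i, hi⟩ := (IsGreatest.pi_norm fun i ↦ (q i : ℚ_[p])).1
  exact ⟨i, (supNormP_eq_norm q).trans hi.symm⟩

theorem exists_supNormP_eq_zpow {m : ℕ} {q : Fin m → ℚ} (hq : supNormP p q ≠ 0) :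
    ∃ a : ℤ, supNormP p q = (p : ℝ) ^ a := by
  obtain ⟨i, hi⟩ := exists_supNormP_eq hq
  rw [hi] at hq ⊢
  exact ⟨_, Padic.norm_eq_zpow_neg_valuation (norm_ne_zero_iff.1 hq)⟩

end SupNorms

section Integrality

theorem isZInvP_intCast {p : ℕ} (z : ℤ) : IsZInvP p z := ⟨z, 0, by rw [pow_zero, div_one]⟩

theorem IsZInvP.zpow_mul {q : ℚ} (hq : IsZInvP p q) (e : ℤ) : IsZInvP p ((p : ℚ) ^ e * q) := by
  have hp := (Fact.out : p.Prime).ne_zero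
  obtain ⟨z, k, rfl⟩ := hq
  obtain ⟨f, rfl | rfl⟩ := e.eq_nat_or_neg
  · exact ⟨p ^ f * z, k, by rw [zpow_natCast, mul_div_assoc']; push_cast; rfl⟩
  · refine ⟨z, k + f, ?_⟩
    rw [zpow_neg, zpow_natCast, pow_add]
    field_simp

theorem IsZInvP.exists_intCast_eq {q : ℚ} (hq : IsZInvP p q) (h : ‖(q : ℚ_[p])‖ ≤ 1) :
    ∃ z : ℤ, (z : ℚ) = q := by
  have hp := (Fact.out : p.Prime).pos
  obtain ⟨z, k, rfl⟩ := hq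
  have hz : ‖(z : ℚ_[p])‖ ≤ (p : ℝ) ^ (-(k : ℤ)) := by
    push_cast at h
    rwa [norm_div, norm_pow, Padic.norm_p, div_le_one (by positivity), inv_pow, ← zpow_natCast,
      ← zpow_neg] at h
  obtain ⟨w, rfl⟩ := (Padic.norm_int_le_pow_iff_dvd z k).1 hz
  exact ⟨w, by push_cast; field_simp⟩

end Integrality

section AffineForms

variable {n : ℕ} {y : Fin n → ℚ_[p]} {q₀ : ℚ} {q : Fin n → ℚ} {c : ℕ}

/-- The affine form `q·y + q₀` with rational coefficients. -/
noncomputable def affineForm (y : Fin n → ℚ_[p]) (q₀ : ℚ) (q : Fin n → ℚ) : ℚ_[p] :=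
  (∑ i, (q i : ℚ_[p]) * y i) + q₀

theorem norm_sum_mul_le {ι : Type*} [Fintype ι] (x y : ι → ℚ_[p]) :
    ‖∑ i, x i * y i‖ ≤ ‖x‖ * ‖y‖ :=
  IsUltrametricDist.norm_sum_le_of_forall_le_of_nonneg (by positivity) fun i _ ↦
    (norm_mul _ _).trans_le (by gcongr <;> exact norm_le_pi_norm _ i)

theorem linForm_cons_one_eq_mul_affineForm {z : Fin (n + 1) → ℤ} {r : ℚ}
    (hz : ∀ i, (z i : ℚ) = r * (Fin.cons q₀ q : Fin (n + 1) → ℚ) i) :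
    linForm (Fin.cons 1 y) z = r * affineForm y q₀ q := by
  have hz' (i) : (z i : ℚ_[p]) = r * ((Fin.cons q₀ q : Fin (n + 1) → ℚ) i : ℚ_[p]) := by
    rw [← Rat.cast_mul, ← hz, Rat.cast_intCast]
  simp only [linForm_apply, hz', Fin.sum_univ_succ, Fin.cons_zero, Fin.cons_succ, affineForm,
    mul_one, mul_assoc, mul_add, Finset.mul_sum]
  exact add_comm _ _

theorem linForm_cons_one (y : Fin n → ℚ_[p]) (z : Fin (n + 1) → ℤ) :
    linForm (Fin.cons 1 y) z = affineForm y (z 0 : ℤ) fun i ↦ (z i.succ : ℤ) := by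
  rw [linForm_cons_one_eq_mul_affineForm (q₀ := (z 0 : ℤ)) (q := fun i ↦ (z i.succ : ℤ)) (r := 1)
    (Fin.forall_fin_succ.2 ⟨(one_mul _).symm, fun i ↦ (one_mul _).symm⟩), Rat.cast_one, one_mul]

theorem norm_cons_le (hy : ‖y‖ ≤ (p : ℝ) ^ c) (hq : ‖affineForm y q₀ q‖ ≤ supNormP p q)
    (i : Fin (n + 1)) :
    ‖((Fin.cons q₀ q : Fin (n + 1) → ℚ) i : ℚ_[p])‖ ≤ supNormP p q * (p : ℝ) ^ c := by
  have hnonneg : 0 ≤ supNormP p q := (norm_nonneg _).trans hq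
  have hle : supNormP p q ≤ supNormP p q * (p : ℝ) ^ c :=
    le_mul_of_one_le_right hnonneg (one_le_pow₀ (mod_cast (Fact.out : p.Prime).one_le))
  refine Fin.cases ?_ (fun i ↦ (norm_le_supNormP q i).trans hle) i
  have hsum : ‖∑ i, (q i : ℚ_[p]) * y i‖ ≤ supNormP p q * (p : ℝ) ^ c :=
    (norm_sum_mul_le _ y).trans (by rw [← supNormP_eq_norm]; gcongr)
  calc ‖(q₀ : ℚ_[p])‖ = ‖affineForm y q₀ q + -∑ i, (q i : ℚ_[p]) * y i‖ := by
        rw [affineForm, add_neg_cancel_comm]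
    _ ≤ max ‖affineForm y q₀ q‖ ‖-∑ i, (q i : ℚ_[p]) * y i‖ := Padic.nonarchimedean _ _
    _ ≤ supNormP p q * (p : ℝ) ^ c :=
      max_le (hq.trans hle) ((norm_neg _).trans_le hsum)

/-- The factor `p^c ‖q‖_p` is a power of `p` just large enough to clear the denominators of `q`
and `q₀`. -/
theorem exists_int_rescaling (hy : ‖y‖ ≤ (p : ℝ) ^ c) (hq₀ : IsZInvP p q₀)
    (hq : ∀ i, IsZInvP p (q i)) (hne : supNormP p q ≠ 0)
    (hle : ‖affineForm y q₀ q‖ ≤ supNormP p q) :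
    ∃ z : Fin (n + 1) → ℤ, z ≠ 0 ∧
      supNormP p q * ‖linForm (Fin.cons 1 y) z‖ ≤ ‖affineForm y q₀ q‖ ∧
      ‖z‖ ≤ (p : ℝ) ^ c * (supNormP p q * supNormR (Fin.cons q₀ q)) := by
  have hp := (Fact.out : p.Prime).pos
  have hp' : (p : ℝ) ≠ 0 := by positivity
  obtain ⟨j, hj⟩ := exists_supNormP_eq hne
  have hpos : 0 < supNormP p q := hj ▸ norm_pos_iff.2 fun h ↦ hne (hj.trans (by rw [h, norm_zero]))
  obtain ⟨a, ha⟩ := exists_supNormP_eq_zpow hne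
  have hscale : (p : ℝ) ^ (a + c) = supNormP p q * (p : ℝ) ^ c := by
    rw [zpow_add₀ hp', zpow_natCast, ha]
  have hnorm : ‖(((p : ℚ) ^ (a + c) : ℚ) : ℚ_[p])‖ = (supNormP p q * (p : ℝ) ^ c)⁻¹ := by
    push_cast
    rw [Padic.norm_p_zpow, zpow_neg, hscale]
  have hint (i : Fin (n + 1)) : IsZInvP p ((Fin.cons q₀ q : Fin (n + 1) → ℚ) i) :=
    Fin.cases hq₀ hq i
  choose z hz using fun i ↦ ((hint i).zpow_mul (a + c)).exists_intCast_eq <| by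
    rw [Rat.cast_mul, norm_mul, hnorm, inv_mul_le_one₀ (by positivity)]
    exact norm_cons_le hy hle i
  refine ⟨z, fun h0 ↦ hne ?_, ?_, ?_⟩
  · have hqj : q j = 0 := by
      simpa [h0, zpow_ne_zero, hp.ne'] using (hz j.succ).symm
    rw [hj, hqj, Rat.cast_zero, norm_zero]
  · rw [linForm_cons_one_eq_mul_affineForm hz, norm_mul, hnorm, mul_inv, mul_assoc,
      mul_inv_cancel_left₀ hne]
    exact mul_le_of_le_one_left (norm_nonneg _)
      (inv_le_one_of_one_le₀ (one_le_pow₀ (mod_cast hp)))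
  · refine (pi_norm_le_iff_of_nonneg (by rw [supNormR_eq_norm]; positivity)).2 fun i ↦ ?_
    have hzi : (z i : ℝ) = (p : ℝ) ^ (a + c) * ((Fin.cons q₀ q : Fin (n + 1) → ℚ) i : ℝ) := by
      simpa using congrArg (Rat.cast (K := ℝ)) (hz i)
    rw [← Int.norm_cast_real, hzi, hscale, norm_mul, Real.norm_of_nonneg (by positivity),
      mul_comm (supNormP p q), mul_assoc, supNormR_eq_norm]
    gcongr
    exact norm_le_pi_norm (fun i ↦ ((Fin.cons q₀ q : Fin (n + 1) → ℚ) i : ℝ)) i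

end AffineForms

section IntApprox

open Filter Topology

variable {ι : Type*} [Fintype ι]

/-- `Y` admits, at arbitrarily large scales `t`, a nonzero integer form of size below `p^{t/(u+1)}`
whose value at `Y` has norm at most `p^{-t}`. For `Y = (1, y)` this is the dynamical counterpart of
`WpCond p y u`: the exponent `t/(u+1)` is the one that solves `p^{-t} = N^{-(u+1)}` for `N`. -/
def HasIntApprox (Y : ι → ℚ_[p]) (u : ℝ) : Prop :=
  ∃ᶠ t : ℕ in atTop, ∃ z : ι → ℤ, z ≠ 0 ∧ (p : ℝ) ^ t * ‖linForm Y z‖ ≤ 1 ∧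
    ‖z‖ < (p : ℝ) ^ ((t : ℝ) / (u + 1))

theorem lt_rpow_natCast_div_iff {a b s : ℝ} (ha : 0 ≤ a) (hb : 0 ≤ b) (hs : 0 < s) (t : ℕ) :
    a < b ^ ((t : ℝ) / s) ↔ a ^ s < b ^ t := by
  rw [div_eq_mul_inv, Real.rpow_mul hb, Real.rpow_natCast,
    Real.lt_rpow_inv_iff_of_pos ha (by positivity) hs]

theorem exists_pos_forall_le_norm_linForm {Y : ι → ℚ_[p]}
    (hY : ∀ z : ι → ℤ, z ≠ 0 → linForm Y z ≠ 0) (B : ℝ) :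
    ∃ δ > 0, ∀ z : ι → ℤ, z ≠ 0 → ‖z‖ ≤ B → δ ≤ ‖linForm Y z‖ := by
  have hfin : (closedBall (0 : ι → ℤ) B).Finite := (isCompact_closedBall 0 B).finite_of_discrete
  have hev : ∀ᶠ δ in 𝓝[>] (0 : ℝ), ∀ z ∈ closedBall (0 : ι → ℤ) B, z ≠ 0 → δ ≤ ‖linForm Y z‖ := by
    refine (eventually_all_finite hfin).2 fun z _ ↦ ?_
    by_cases hz : z = 0
    · exact .of_forall fun _ h ↦ absurd hz h
    · filter_upwards [nhdsWithin_le_nhds (Iio_mem_nhds (norm_pos_iff.2 (hY z hz)))] with δ hδ _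
      exact hδ.le
  obtain ⟨δ, hδ, hpos⟩ := (hev.and self_mem_nhdsWithin).exists
  exact ⟨δ, hpos, fun z hz hzB ↦ hδ z (mem_closedBall_zero_iff.2 hzB) hz⟩

variable {u v : ℝ}

theorem rpow_div_add_one_mul_rpow_div_add_one_pow {b : ℝ} (hb : 0 < b) (hu : u + 1 ≠ 0) (t : ℕ) :
    b ^ ((t : ℝ) / (u + 1)) * (b ^ (u / (u + 1))) ^ t = b ^ t := by
  rw [← Real.rpow_natCast, ← Real.rpow_mul hb.le, ← Real.rpow_add hb, ← Real.rpow_natCast]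
  congr 1
  field_simp
  ring

theorem eventually_forall_norm_mul_norm_linForm_lt (Y : ι → ℚ_[p]) (hu : 0 < u) {δ : ℝ}
    (hδ : 0 < δ) : ∀ᶠ t : ℕ in atTop, ∀ z : ι → ℤ, (p : ℝ) ^ t * ‖linForm Y z‖ ≤ 1 →
      ‖z‖ < (p : ℝ) ^ ((t : ℝ) / (u + 1)) → ‖z‖ * ‖linForm Y z‖ < δ := by
  have hp1 : (1 : ℝ) < p := Nat.one_lt_cast.2 (Fact.out : p.Prime).one_lt
  have hr : 1 < (p : ℝ) ^ (u / (u + 1)) := Real.one_lt_rpow hp1 (by positivity)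
  filter_upwards [(tendsto_pow_atTop_atTop_of_one_lt hr).eventually_gt_atTop δ⁻¹]
    with t ht z hzt hzu
  refine lt_of_le_of_lt ?_ (inv_lt_of_inv_lt₀ hδ ht)
  rw [← one_div, le_div_iff₀ (by positivity)]
  refine le_trans ?_ hzt
  rw [← rpow_div_add_one_mul_rpow_div_add_one_pow (one_pos.trans hp1) (by positivity : u + 1 ≠ 0) t,
    mul_right_comm]
  gcongr

variable {n : ℕ} {y : Fin n → ℚ_[p]}

theorem WpCond.exists_frequently_exists_int (h : WpCond p y v) (hv : 0 < v) :
    ∃ K : ℝ, 0 ≤ K ∧ ∃ᶠ Q : ℝ in atTop, ∃ z : Fin (n + 1) → ℤ, z ≠ 0 ∧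
      Q ^ (v + 1) * ‖linForm (Fin.cons 1 y) z‖ ≤ 1 ∧ ‖z‖ ≤ K * Q := by
  have hp := (Fact.out : p.Prime)
  obtain ⟨c, hc⟩ := pow_unbounded_of_one_lt ‖y‖ (Nat.one_lt_cast.2 hp.one_lt)
  refine ⟨(p : ℝ) ^ c, by positivity, frequently_atTop.2 fun T ↦ ?_⟩
  obtain ⟨q₀, q, hq₀, hq, hT, hlin⟩ := h (max T 1)
  rw [max_lt_iff] at hT
  set A := supNormP p q
  set N := supNormR (Fin.cons q₀ q : Fin (n + 1) → ℚ)
  have hQ : 0 < A * N := one_pos.trans hT.2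
  have hA : 0 < A := pos_of_mul_pos_left hQ ((supNormR_eq_norm _).trans_ge (norm_nonneg _))
  have hsize : (A * N) ^ (-v) * N⁻¹ = A * ((A * N) ^ (v + 1))⁻¹ := by
    rw [Real.rpow_add_one hQ.ne', Real.rpow_neg hQ.le]
    field_simp
  have hlin' : ‖affineForm y q₀ q‖ < A * ((A * N) ^ (v + 1))⁻¹ := hlin.trans_eq hsize
  have hsmall : ((A * N) ^ (v + 1))⁻¹ ≤ 1 :=
    inv_le_one_of_one_le₀ (Real.one_le_rpow hT.2.le (by positivity))
  obtain ⟨z, hz, hzlin, hznorm⟩ := exists_int_rescaling hc.le hq₀ hq hA.ne'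
    (hlin'.le.trans (mul_le_of_le_one_right hA.le hsmall))
  refine ⟨A * N, hT.1.le, z, hz, ?_, hznorm⟩
  have hle := le_of_mul_le_mul_left (hzlin.trans hlin'.le) hA
  rwa [← one_div, le_div_iff₀' (by positivity)] at hle

theorem eventually_exists_pow_le_rpow (hu : 0 < u + 1) (huv : u < v) {K : ℝ} (hK : 0 ≤ K)
    (t₀ : ℕ) : ∀ᶠ Q : ℝ in atTop, ∃ t ≥ t₀, (p : ℝ) ^ t ≤ Q ^ (v + 1) ∧
      K * Q < (p : ℝ) ^ ((t : ℝ) / (u + 1)) := by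
  have hp := (Fact.out : p.Prime)
  have hp1 : (1 : ℝ) < p := Nat.one_lt_cast.2 hp.one_lt
  filter_upwards [eventually_ge_atTop 1,
    (tendsto_rpow_atTop (sub_pos.2 huv)).eventually_gt_atTop (p * K ^ (u + 1)),
    (tendsto_rpow_atTop (hu.trans (add_lt_add_left huv 1))).eventually_ge_atTop ((p : ℝ) ^ t₀)]
    with Q hQ1 hQK hQt₀
  have hQ : 0 < Q := one_pos.trans_le hQ1
  obtain ⟨t, htQ, hQt⟩ := exists_nat_pow_near (Real.one_le_rpow hQ1 (by linarith : 0 ≤ v + 1)) hp1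
  refine ⟨t, Nat.lt_succ_iff.1 ((pow_lt_pow_iff_right₀ hp1).1 (hQt₀.trans_lt hQt)), htQ,
    (lt_rpow_natCast_div_iff (by positivity) (by positivity) hu t).2 ?_⟩
  refine lt_of_mul_lt_mul_left ?_ (p.cast_nonneg (α := ℝ))
  calc p * (K * Q) ^ (u + 1) = p * K ^ (u + 1) * Q ^ (u + 1) := by
        rw [Real.mul_rpow hK hQ.le, mul_assoc]
    _ ≤ Q ^ (v - u) * Q ^ (u + 1) := by gcongr
    _ = Q ^ (v + 1) := by rw [← Real.rpow_add hQ, ← add_assoc, sub_add_cancel]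
    _ < p * (p : ℝ) ^ t := hQt.trans_eq (pow_succ' _ _)

theorem WpCond.hasIntApprox (h : WpCond p y v) (hv : 0 < v) (hu : 0 < u + 1) (huv : u < v) :
    HasIntApprox (Fin.cons 1 y : Fin (n + 1) → ℚ_[p]) u := by
  obtain ⟨K, hK, hfreq⟩ := h.exists_frequently_exists_int hv
  refine frequently_atTop.2 fun t₀ ↦ ?_
  obtain ⟨Q, ⟨z, hz, hzQ, hzK⟩, t, ht₀, htQ, hQt⟩ :=
    (hfreq.and_eventually (eventually_exists_pow_le_rpow (p := p) hu huv hK t₀)).exists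
  exact ⟨t, ht₀, z, hz, le_trans (by gcongr) hzQ, hzK.trans_lt hQt⟩

variable (p) in
/-- The `p`-adic norm of an integer vector with its zeroth coordinate dropped. -/
noncomputable def tailNorm (z : Fin (n + 1) → ℤ) : ℝ := supNormP p fun i : Fin n ↦ (z i.succ : ℚ)

theorem tailNorm_le_one (z : Fin (n + 1) → ℤ) : tailNorm p z ≤ 1 := by
  rw [tailNorm, supNormP_eq_norm]
  refine (pi_norm_le_iff_of_nonneg zero_le_one).2 fun i ↦ ?_
  rw [Rat.cast_intCast]
  exact Padic.norm_int_le_one _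

theorem one_le_tailNorm_mul_norm {z : Fin (n + 1) → ℤ} {i : Fin n} (hi : z i.succ ≠ 0) :
    1 ≤ tailNorm p z * ‖z‖ := by
  have htail : ‖(z i.succ : ℚ_[p])‖ ≤ tailNorm p z := by
    simpa only [tailNorm, Rat.cast_intCast] using
      norm_le_supNormP (p := p) (fun i ↦ (z i.succ : ℚ)) i
  calc (1 : ℝ) ≤ (z i.succ).natAbs * ‖(z i.succ : ℚ_[p])‖ := one_le_natAbs_mul_padic_norm hi
    _ ≤ ‖z‖ * tailNorm p z := by
      gcongr
      rw [Nat.cast_natAbs, Int.cast_abs]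
      exact norm_le_pi_norm z i.succ
    _ = tailNorm p z * ‖z‖ := mul_comm _ _

theorem one_le_norm_mul_norm_linForm_of_tail_eq_zero {z : Fin (n + 1) → ℤ} (hz : z ≠ 0)
    (h : ∀ i : Fin n, z i.succ = 0) : 1 ≤ ‖z‖ * ‖linForm (Fin.cons 1 y) z‖ := by
  have hz₀ : z 0 ≠ 0 := fun h₀ ↦ hz (funext (Fin.cases h₀ h))
  have hlin : linForm (Fin.cons 1 y) z = z 0 := by
    simp [linForm_apply, Fin.sum_univ_succ, h]
  refine (one_le_natAbs_mul_padic_norm (p := p) hz₀).trans ?_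
  rw [hlin, Nat.cast_natAbs, Int.cast_abs]
  gcongr
  exact norm_le_pi_norm z 0

theorem wpCond_of_forall_exists_int
    (h : ∀ T : ℝ, ∃ z : Fin (n + 1) → ℤ, T < tailNorm p z * ‖z‖ ∧
      ‖linForm (Fin.cons 1 y) z‖ < (tailNorm p z * ‖z‖) ^ (-v) * ‖z‖⁻¹) : WpCond p y v := by
  intro T
  obtain ⟨z, hT, hz⟩ := h T
  refine ⟨z 0, fun i ↦ z i.succ, isZInvP_intCast _, fun i ↦ isZInvP_intCast _, ?_⟩
  rw [supNormR_cons_intCast]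
  exact ⟨hT, (congrArg norm (linForm_cons_one y z)).symm.trans_lt hz⟩

/-- Replacing `z` by `N z` with `N ≡ 1 (mod p)` large leaves its `p`-adic size unchanged. -/
theorem wpCond_of_linForm_eq_zero {z : Fin (n + 1) → ℤ} (hz : z ≠ 0)
    (h : linForm (Fin.cons 1 y) z = 0) : WpCond p y v := by
  refine wpCond_of_forall_exists_int fun T ↦ ?_
  obtain ⟨i, hi⟩ : ∃ i : Fin n, z i.succ ≠ 0 := by
    by_contra! htail
    have := one_le_norm_mul_norm_linForm_of_tail_eq_zero (y := y) hz htail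
    rw [h, norm_zero, mul_zero] at this
    exact this.not_gt one_pos
  obtain ⟨k, hk⟩ := exists_nat_gt (max T 0)
  have hp := (Fact.out : p.Prime).pos
  let N : ℕ := p * k + 1
  have hN : ‖(N : ℚ_[p])‖ = 1 := by
    rw [Padic.norm_natCast_eq_one_iff]
    exact (Nat.coprime_mul_left_add_right p 1 k).2 p.coprime_one_right
  have htail : tailNorm p ((N : ℤ) • z) = tailNorm p z := by
    simp [tailNorm, supNormP, hN]
  have hnorm : ‖(N : ℤ) • z‖ = N * ‖z‖ := (norm_smul _ _).trans (by rw [Int.norm_natCast])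
  have hlarge : max T 0 < tailNorm p ((N : ℤ) • z) * ‖(N : ℤ) • z‖ := by
    have hkN : (k : ℝ) ≤ N := mod_cast (Nat.le_mul_of_pos_left k hp).trans (Nat.le_succ _)
    have := one_le_tailNorm_mul_norm (p := p) hi
    rw [htail, hnorm]
    nlinarith
  rw [max_lt_iff] at hlarge
  refine ⟨(N : ℤ) • z, hlarge.1, ?_⟩
  rw [map_smul, h, smul_zero, norm_zero]
  have hpos : 0 < ‖(N : ℤ) • z‖ := (norm_nonneg _).lt_of_ne' (right_ne_zero_of_mul hlarge.2.ne')
  exact mul_pos (Real.rpow_pos_of_pos hlarge.2 _) (inv_pos.2 hpos)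

theorem exists_int_rescaling_of_int {c : ℕ} (hy : ‖y‖ ≤ (p : ℝ) ^ c) {z : Fin (n + 1) → ℤ}
    (hz : tailNorm p z ≠ 0) (hle : ‖linForm (Fin.cons 1 y) z‖ ≤ tailNorm p z) :
    ∃ w : Fin (n + 1) → ℤ, w ≠ 0 ∧
      tailNorm p z * ‖linForm (Fin.cons 1 y) w‖ ≤ ‖linForm (Fin.cons 1 y) z‖ ∧
      ‖w‖ ≤ (p : ℝ) ^ c * (tailNorm p z * ‖z‖) := by
  rw [linForm_cons_one y z] at hle ⊢
  simpa only [tailNorm, supNormR_cons_intCast] using exists_int_rescaling hy (isZInvP_intCast (z 0))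
    (fun i : Fin n ↦ isZInvP_intCast (z i.succ)) hz hle

theorem eventually_forall_lt_tailNorm_mul_norm
    (hy : ∀ z : Fin (n + 1) → ℤ, z ≠ 0 → linForm (Fin.cons 1 y) z ≠ 0) (hu : 0 < u) (T : ℝ) :
    ∀ᶠ t : ℕ in atTop, ∀ z : Fin (n + 1) → ℤ, z ≠ 0 →
      (p : ℝ) ^ t * ‖linForm (Fin.cons 1 y) z‖ ≤ 1 → ‖z‖ < (p : ℝ) ^ ((t : ℝ) / (u + 1)) →
      T < tailNorm p z * ‖z‖ := by
  obtain ⟨c, hc⟩ := pow_unbounded_of_one_lt ‖y‖ (Nat.one_lt_cast.2 (Fact.out : p.Prime).one_lt)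
  obtain ⟨δ, hδ, hδle⟩ := exists_pos_forall_le_norm_linForm hy ((p : ℝ) ^ c * T)
  filter_upwards [eventually_forall_norm_mul_norm_linForm_lt (Fin.cons 1 y) hu (lt_min hδ one_pos)]
    with t ht z hz hzt hzu
  obtain ⟨hltδ, hlt1⟩ := lt_min_iff.1 (ht z hzt hzu)
  obtain ⟨i, hi⟩ : ∃ i : Fin n, z i.succ ≠ 0 := by
    by_contra! htail
    exact (one_le_norm_mul_norm_linForm_of_tail_eq_zero hz htail).not_gt hlt1
  have hA := one_le_tailNorm_mul_norm (p := p) hi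
  have hlin : ‖linForm (Fin.cons 1 y) z‖ ≤ tailNorm p z :=
    le_of_mul_le_mul_left ((hlt1.le.trans hA).trans_eq (mul_comm _ _)) (norm_pos_iff.2 hz)
  obtain ⟨w, hw, hwlin, hwnorm⟩ := exists_int_rescaling_of_int hc.le
    (left_ne_zero_of_mul (one_pos.trans_le hA).ne') hlin
  by_contra! hT
  refine (hδle w hw (hwnorm.trans (by gcongr))).not_gt ?_
  calc ‖linForm (Fin.cons 1 y) w‖ ≤ tailNorm p z * ‖z‖ * ‖linForm (Fin.cons 1 y) w‖ :=
        le_mul_of_one_le_left (norm_nonneg _) hA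
    _ = ‖z‖ * (tailNorm p z * ‖linForm (Fin.cons 1 y) w‖) := by ring
    _ ≤ ‖z‖ * ‖linForm (Fin.cons 1 y) z‖ := by gcongr
    _ < δ := hltδ

theorem HasIntApprox.wpCond (h : HasIntApprox (Fin.cons 1 y : Fin (n + 1) → ℚ_[p]) u)
    (hv : 0 < v) (hvu : v < u) : WpCond p y v := by
  by_cases hex : ∃ z : Fin (n + 1) → ℤ, z ≠ 0 ∧ linForm (Fin.cons 1 y) z = 0
  · obtain ⟨z, hz, hz0⟩ := hex
    exact wpCond_of_linForm_eq_zero hz hz0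
  push Not at hex
  have hu : 0 < u := hv.trans hvu
  have hp := (Fact.out : p.Prime).pos
  refine wpCond_of_forall_exists_int fun T ↦ ?_
  obtain ⟨t, ⟨z, hz, hzt, hzu⟩, hlarge⟩ := (h.and_eventually
    (eventually_forall_lt_tailNorm_mul_norm hex hu (max T 0))).exists
  obtain ⟨hT, hpos⟩ := max_lt_iff.1 (hlarge z hz hzt hzu)
  have hN : 1 ≤ ‖z‖ := by
    obtain ⟨i, hi⟩ := Function.ne_iff.1 hz
    have hzi : (1 : ℝ) ≤ ‖z i‖ := by
      rw [Int.norm_eq_abs]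
      exact_mod_cast Int.one_le_abs hi
    exact hzi.trans (norm_le_pi_norm z i)
  have hN0 : 0 < ‖z‖ := one_pos.trans_le hN
  refine ⟨z, hT, ?_⟩
  calc ‖linForm (Fin.cons 1 y) z‖ ≤ ((p : ℝ) ^ t)⁻¹ := by
        rwa [← one_div, le_div_iff₀' (by positivity)]
    _ < (‖z‖ ^ (u + 1))⁻¹ := by
        gcongr
        exact (lt_rpow_natCast_div_iff hN0.le (by positivity) (by positivity) t).1 hzu
    _ ≤ (‖z‖ ^ (v + 1))⁻¹ := by gcongr
    _ = ‖z‖ ^ (-v) * ‖z‖⁻¹ := by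
        rw [Real.rpow_add_one hN0.ne', mul_inv, Real.rpow_neg hN0.le]
    _ ≤ (tailNorm p z * ‖z‖) ^ (-v) * ‖z‖⁻¹ := by
        gcongr ?_ * _
        exact Real.rpow_le_rpow_of_nonpos hpos
          (mul_le_of_le_one_left hN0.le (tailNorm_le_one z)) (neg_nonpos.2 hv.le)

theorem wpExp_le_iff {v : ℝ≥0∞} : wpExp p y ≤ v ↔
    ∀ u : ℚ, v < ENNReal.ofReal u → ¬ HasIntApprox (Fin.cons 1 y : Fin (n + 1) → ℚ_[p]) u := by
  refine ⟨fun h u hvu hu ↦ ?_, fun h ↦ iSup₂_le fun w ⟨hw, hyw⟩ ↦ ?_⟩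
  · obtain ⟨w, -, hvw, hwu⟩ := ENNReal.lt_iff_exists_rat_btwn.1 hvu
    have hw : (0 : ℝ) < w := ENNReal.ofReal_pos.1 (bot_le.trans_lt hvw)
    have hwu' : (w : ℝ) < u := (ENNReal.ofReal_lt_ofReal_iff_of_nonneg hw.le).1 hwu
    exact (hvw.trans_le ((le_iSup₂_of_le (w : ℝ) ⟨hw, hu.wpCond hw hwu'⟩ le_rfl).trans h)).false
  · by_contra! hvw
    obtain ⟨u, hu, hvu, huw⟩ := ENNReal.lt_iff_exists_rat_btwn.1 hvw
    have hu' : (0 : ℝ) ≤ u := mod_cast hu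
    exact h u hvu (hyw.hasIntApprox hw (by positivity)
      ((ENNReal.ofReal_lt_ofReal_iff_of_nonneg hu').1 huw))

end IntApprox

section Curve

open Filter Topology

theorem ae_eventually_notMem_of_measure_le_geometric {α : Type*} [MeasurableSpace α]
    {μ : Measure α} {s : ℕ → Set α} {c q : ℝ≥0∞} (hc : c ≠ ∞) (hq : q < 1)
    (h : ∀ᶠ t in atTop, μ (s t) ≤ c * q ^ t) : ∀ᵐ x ∂μ, ∀ᶠ t in atTop, x ∉ s t := by
  obtain ⟨T, hT⟩ := eventually_atTop.1 h
  have hsum : ∑' t, μ (s (t + T)) ≠ ∞ := by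
    refine ne_top_of_le_ne_top (ENNReal.mul_ne_top hc (b := (1 - q)⁻¹) ?_) ?_
    · exact ENNReal.inv_ne_top.2 (tsub_pos_of_lt hq).ne'
    · rw [← ENNReal.tsum_geometric, ← ENNReal.tsum_mul_left]
      refine ENNReal.tsum_le_tsum fun t ↦ (hT _ (Nat.le_add_left T t)).trans ?_
      gcongr c * ?_
      exact pow_le_pow_right_of_le_one' hq.le (Nat.le_add_right t T)
  filter_upwards [ae_eventually_notMem hsum] with x hx
  rwa [← map_add_atTop_eq_nat T, eventually_map]

variable (ν : Measure ℤ_[p]) [ν.IsAddHaarMeasure]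

section Rows

variable {ι : Type*} [Fintype ι] [Nonempty ι] {f : ι → ℕ → ℚ_[p]} {u v : ℝ}

theorem exists_eventually_measure_le_geometric (hf : ∀ i, Tendsto (f i) atTop (𝓝 0))
    (hu : 0 < u + 1) (huv : u < v) (h : ¬ HasIntApprox (fun i ↦ evalSeries (f i) 0) u) :
    ∃ c q : ℝ≥0∞, c ≠ ∞ ∧ q < 1 ∧ ∀ᶠ t : ℕ in atTop,
      ν {x | ∃ z : ι → ℤ, z ≠ 0 ∧ (p : ℝ) ^ t * ‖linForm (fun i ↦ evalSeries (f i) x) z‖ ≤ 1 ∧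
        ‖z‖ < (p : ℝ) ^ ((t : ℝ) / (v + 1))} ≤ c * q ^ t := by
  have hp := (Fact.out : p.Prime)
  obtain ⟨K, a, hK, ha, hbound⟩ := exists_measure_exists_small_linForm_le ν hf
  let r : ℝ := (p : ℝ) ^ (1 / (v + 1) - 1 / (u + 1))
  have hr0 : 0 < r := Real.rpow_pos_of_pos (mod_cast hp.pos) _
  have hr1 : r < 1 := Real.rpow_lt_one_of_one_lt_of_neg (mod_cast hp.one_lt)
    (sub_neg.2 (one_div_lt_one_div_of_lt hu (by gcongr)))
  have hscale (t : ℕ) : (p : ℝ) ^ ((t : ℝ) / (v + 1)) = r ^ t * (p : ℝ) ^ ((t : ℝ) / (u + 1)) := by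
    rw [← Real.rpow_mul_natCast p.cast_nonneg, ← Real.rpow_add (mod_cast hp.pos)]
    ring_nf
  let C : ℝ := (Fintype.card ι : ℝ) ^ 2
  have hC : 0 < C := by positivity
  have hlim : Tendsto (fun t : ℕ ↦ C * r ^ t) atTop (𝓝 0) := by
    simpa only [mul_zero] using (tendsto_pow_atTop_nhds_zero_of_lt_one hr0.le hr1).const_mul C
  refine ⟨K * ENNReal.ofReal (C ^ a), ENNReal.ofReal (r ^ a), ENNReal.mul_ne_top hK (by simp),
    ENNReal.ofReal_lt_one.2 (Real.rpow_lt_one hr0.le hr1 ha), ?_⟩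
  filter_upwards [not_frequently.1 h, hlim.eventually_le_const one_pos] with t ht hCt
  calc _ ≤ K * ENNReal.ofReal ((C * r ^ t) ^ a) := by
        refine (measure_mono ?_).trans (hbound t (R := (p : ℝ) ^ ((t : ℝ) / (u + 1)))
          (Real.rpow_pos_of_pos (mod_cast hp.pos) _) (by positivity) hCt fun z hz hzt ↦ ?_)
        · rintro x ⟨z, hz, hzt, hzv⟩
          refine ⟨z, hz, hzt, ?_⟩
          rw [mul_assoc, ← hscale]
          exact mul_lt_mul_of_pos_left hzv hC
        · by_contra! hzu
          exact ht ⟨z, hz, hzt, hzu⟩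
    _ = K * ENNReal.ofReal (C ^ a) * ENNReal.ofReal (r ^ a) ^ t := by
        rw [mul_assoc, ← ENNReal.ofReal_pow (by positivity), ← ENNReal.ofReal_mul (by positivity),
          Real.mul_rpow hC.le (by positivity), ← Real.rpow_pow_comm hr0.le]

theorem ae_not_hasIntApprox_evalSeries (hf : ∀ i, Tendsto (f i) atTop (𝓝 0)) (hu : 0 < u + 1)
    (huv : u < v) (h : ¬ HasIntApprox (fun i ↦ evalSeries (f i) 0) u) :
    ∀ᵐ x ∂ν, ¬ HasIntApprox (fun i ↦ evalSeries (f i) x) v := by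
  obtain ⟨c, q, hc, hq, hle⟩ := exists_eventually_measure_le_geometric ν hf hu huv h
  filter_upwards [ae_eventually_notMem_of_measure_le_geometric hc hq hle] with x hx
  exact not_frequently.2 hx

end Rows

variable {n : ℕ}

theorem evalSeries_single_one (x : ℤ_[p]) : evalSeries (Pi.single 0 1) x = 1 := by
  rw [evalSeries, tsum_eq_single 0 fun k hk ↦ by rw [Pi.single_eq_of_ne hk, zero_mul],
    Pi.single_eq_same, pow_zero, mul_one]

theorem ae_wpExp_evalSeries_le {f : Fin n → ℕ → ℚ_[p]} (hf : ∀ i, Tendsto (f i) atTop (𝓝 0)) :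
    ∀ᵐ x ∂ν, wpExp p (fun i ↦ evalSeries (f i) x) ≤ wpExp p (fun i ↦ evalSeries (f i) 0) := by
  let F : Fin (n + 1) → ℕ → ℚ_[p] := Fin.cons (Pi.single 0 1) f
  have hF : ∀ i, Tendsto (F i) atTop (𝓝 0) := by
    refine Fin.cases ?_ hf
    change Tendsto (Pi.single 0 1 : ℕ → ℚ_[p]) atTop (𝓝 0)
    refine tendsto_const_nhds.congr' ?_
    filter_upwards [eventually_ne_atTop 0] with k hk
    rw [Pi.single_eq_of_ne hk]
  have hcons (x : ℤ_[p]) : (fun i ↦ evalSeries (F i) x) =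
      (Fin.cons 1 fun i ↦ evalSeries (f i) x : Fin (n + 1) → ℚ_[p]) :=
    funext (Fin.cases (evalSeries_single_one x) fun _ ↦ rfl)
  generalize hv : wpExp p (fun i ↦ evalSeries (f i) 0) = v
  simp only [wpExp_le_iff, ← hcons, ae_all_iff]
  intro u huv
  obtain ⟨w, hw, hvw, hwu⟩ := ENNReal.lt_iff_exists_rat_btwn.1 huv
  have hwu' : (w : ℝ) < u :=
    (ENNReal.ofReal_lt_ofReal_iff_of_nonneg (mod_cast hw)).1 hwu
  refine ae_not_hasIntApprox_evalSeries ν hF (by positivity) hwu' ?_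
  rw [hcons]
  exact wpExp_le_iff.1 hv.le w hvw

end Curve

theorem IsChart.mono {d n : ℕ} {M : Set (Fin n → ℚ_[p])}
    {U V : Set (Fin d → ℚ_[p])} {f : (Fin d → ℚ_[p]) → Fin n → ℚ_[p]} (h : IsChart p d n M U f)
    (hV : IsOpen V) (hVU : V ⊆ U) : IsChart p d n M V f := by
  obtain ⟨-, hanal, hinj, himm, hemb, W₀, hW₀, hMW₀⟩ := h
  refine ⟨hV, hanal.mono hVU, hinj.mono hVU, fun x hx ↦ himm x (hVU hx), fun x hx V' hV' hxV' ↦ ?_,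
    ?_⟩
  · obtain ⟨W, hW, hxW, hWsub⟩ := hemb x (hVU hx) (V' ∩ V) (hV'.inter hV) ⟨hxV', hx⟩
    exact ⟨W, hW, hxW, (Set.inter_subset_inter_right W (Set.image_mono hVU)).trans
      (hWsub.trans (Set.image_mono (Set.inter_subset_left)))⟩
  · choose! W hW hxW hWsub using fun x (hx : x ∈ V) ↦ hemb x (hVU hx) V hV hx
    refine ⟨W₀ ∩ ⋃ x ∈ V, W x, hW₀.inter (isOpen_biUnion hW), Set.Subset.antisymm ?_ ?_⟩
    · rintro y ⟨hyM, hyW₀, hy⟩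
      obtain ⟨x, hx, hyx⟩ := Set.mem_iUnion₂.1 hy
      exact Set.image_mono Set.inter_subset_left (hWsub x hx ⟨hyx, hMW₀.subset ⟨hyM, hyW₀⟩⟩)
    · rintro _ ⟨x, hx, rfl⟩
      obtain ⟨hM, hW₀⟩ := hMW₀.superset ⟨x, hVU hx, rfl⟩
      exact ⟨hM, hW₀, Set.mem_iUnion₂.2 ⟨x, hx, hxW x hx⟩⟩

section Neighborhood

open Filter Topology

theorem measurableSet_hasIntApprox {ι : Type*} [Fintype ι] (u : ℝ) :
    MeasurableSet {Y : ι → ℚ_[p] | HasIntApprox Y u} := by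
  have hlimsup : {Y : ι → ℚ_[p] | HasIntApprox Y u} = limsup (fun t : ℕ ↦
      {Y | ∃ z : ι → ℤ, z ≠ 0 ∧ (p : ℝ) ^ t * ‖linForm Y z‖ ≤ 1 ∧
        ‖z‖ < (p : ℝ) ^ ((t : ℝ) / (u + 1))}) atTop := by
    ext Y
    rw [mem_limsup_iff_frequently_mem]
    rfl
  rw [hlimsup]
  refine MeasurableSet.measurableSet_limsup fun t ↦ ?_
  simp only [Set.ofPred_exists, Set.ofPred_and]
  refine MeasurableSet.iUnion fun z ↦ (MeasurableSet.const _).inter <|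
    MeasurableSet.inter (measurableSet_le ?_ measurable_const) (MeasurableSet.const _)
  have hcont : Continuous fun Y : ι → ℚ_[p] ↦ linForm Y z := by
    simp_rw [linForm_apply]
    fun_prop
  exact (hcont.norm.const_mul _).measurable

variable {n : ℕ}

theorem measurable_wpExp : Measurable (wpExp p : (Fin n → ℚ_[p]) → ℝ≥0∞) := by
  refine measurable_of_Iic fun v ↦ ?_
  simp only [Set.preimage, Set.mem_Iic, wpExp_le_iff, Set.ofPred_forall]
  refine MeasurableSet.iInter fun u ↦ MeasurableSet.iInter fun _ ↦ MeasurableSet.compl ?_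
  exact (measurableSet_hasIntApprox (u : ℝ)).preimage
    (continuous_const.finCons continuous_id).measurable

theorem measurableSet_setOf_imp_mem_of_continuousOn {α β : Type*} [TopologicalSpace α]
    [MeasurableSpace α] [OpensMeasurableSpace α] [TopologicalSpace β] [MeasurableSpace β]
    [BorelSpace β] {f : α → β} {s : Set α} {t : Set β} (hf : ContinuousOn f s)
    (hs : MeasurableSet s) (ht : MeasurableSet t) : MeasurableSet {x | x ∈ s → f x ∈ t} := by
  have hst := hs.subtype_image (hf.domRestrict.measurable ht)
  refine (hs.compl.union hst).congr (Set.ext fun x ↦ ?_)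
  by_cases hx : x ∈ s <;> simp [hx]

variable {E : Type*} [NormedAddCommGroup E] [NormedSpace ℚ_[p] E]

theorem coe_smul_mem_eball_zero {r : ℝ≥0∞} {y : E} (hy : y ∈ eball 0 r) (s : ℤ_[p]) :
    (s : ℚ_[p]) • y ∈ eball 0 r := by
  rw [mem_eball_zero_iff] at hy ⊢
  refine lt_of_le_of_lt ?_ hy
  rw [enorm_smul]
  refine mul_le_of_le_one_left' ?_
  rw [← ofReal_norm, ENNReal.ofReal_le_one]
  exact s.2

section PowerSeriesOnBall

variable {f : E → Fin n → ℚ_[p]} {P : FormalMultilinearSeries ℚ_[p] E (Fin n → ℚ_[p])} {x₀ : E}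
  {r : ℝ≥0∞} (hf : HasFPowerSeriesOnBall f P x₀ r)
include hf

theorem evalSeries_apply_eq_of_hasFPowerSeriesOnBall {y : E} (hy : y ∈ eball 0 r) (s : ℤ_[p]) :
    (fun i ↦ evalSeries (fun k ↦ P k (fun _ ↦ y) i) s) = f (x₀ + (s : ℚ_[p]) • y) := by
  funext i
  refine HasSum.tsum_eq ?_
  convert Pi.hasSum.1 (hf.hasSum (coe_smul_mem_eball_zero hy s)) i using 2 with k
  rw [(P k).map_smul_univ (fun _ ↦ (s : ℚ_[p])) fun _ ↦ y]
  simp [mul_comm]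

theorem ae_wpExp_smul_le (ν : Measure ℤ_[p]) [ν.IsAddHaarMeasure] {y : E} (hy : y ∈ eball 0 r) :
    ∀ᵐ s : ℤ_[p] ∂ν, wpExp p (f (x₀ + (s : ℚ_[p]) • y)) ≤ wpExp p (f x₀) := by
  have hlim (i) : Tendsto (fun k ↦ P k (fun _ ↦ y) i) atTop (𝓝 0) :=
    (Pi.hasSum.1 (hf.hasSum hy) i).summable.tendsto_atTop_zero
  have hline := ae_wpExp_evalSeries_le ν hlim
  simpa only [evalSeries_apply_eq_of_hasFPowerSeriesOnBall hf hy, PadicInt.coe_zero, zero_smul,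
    add_zero] using hline

variable [MeasurableSpace E] [BorelSpace E]

theorem exists_ne_zero_ae_wpExp_smul_le [SecondCountableTopology E] (μ : Measure E) [SFinite μ] :
    ∃ s : ℤ_[p], s ≠ 0 ∧ ∀ᵐ y ∂μ, y ∈ eball 0 r →
      wpExp p (f (x₀ + (s : ℚ_[p]) • y)) ≤ wpExp p (f x₀) := by
  let ν : Measure ℤ_[p] := Measure.addHaar
  have hcont : ContinuousOn (fun q : E × ℤ_[p] ↦ f (x₀ + (q.2 : ℚ_[p]) • q.1))
      (Prod.fst ⁻¹' eball 0 r) := by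
    refine hf.continuousOn.comp (by fun_prop) fun q hq ↦ ?_
    simpa [edist_eq_enorm_sub] using coe_smul_mem_eball_zero hq q.2
  have hmeas : MeasurableSet {q : E × ℤ_[p] | q.1 ∈ eball 0 r →
      wpExp p (f (x₀ + (q.2 : ℚ_[p]) • q.1)) ≤ wpExp p (f x₀)} :=
    measurableSet_setOf_imp_mem_of_continuousOn (t := {z | wpExp p z ≤ wpExp p (f x₀)}) hcont
      (measurable_fst isOpen_eball.measurableSet) (measurable_wpExp measurableSet_Iic)
  have hlines : ∀ᵐ y ∂μ, ∀ᵐ s : ℤ_[p] ∂ν, y ∈ eball 0 r →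
      wpExp p (f (x₀ + (s : ℚ_[p]) • y)) ≤ wpExp p (f x₀) :=
    .of_forall fun y ↦ eventually_imp_distrib_left.2 (ae_wpExp_smul_le hf ν)
  have hne : ∃ᶠ s in ae ν, s ≠ 0 :=
    frequently_ae_iff.2 (isOpen_compl_singleton.measure_pos ν ⟨1, one_ne_zero⟩).ne'
  exact (hne.and_eventually ((Measure.ae_ae_comm hmeas).1 hlines)).exists

end PowerSeriesOnBall

variable [MeasurableSpace E] [BorelSpace E] [ProperSpace E]

theorem quasiMeasurePreserving_smul_sub {c : ℚ_[p]} (hc : c ≠ 0) (x₀ : E) (μ : Measure E)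
    (ν : Measure E) [μ.IsAddHaarMeasure] [ν.IsAddHaarMeasure] :
    Measure.QuasiMeasurePreserving (fun x ↦ c • (x - x₀)) μ ν := by
  let e : E ≃L[ℚ_[p]] E := ContinuousLinearEquiv.smulLeft (Units.mk0 c hc)
  have : (μ.map e).IsAddHaarMeasure := e.isAddHaarMeasure_map μ
  have he : Measure.QuasiMeasurePreserving e μ ν :=
    ⟨e.continuous.measurable, Measure.absolutelyContinuous_isAddHaarMeasure _ _⟩
  exact he.comp (measurePreserving_sub_right μ x₀).quasiMeasurePreserving

theorem statement2_general {f : E → Fin n → ℚ_[p]} {x₀ : E} (hf : AnalyticAt ℚ_[p] f x₀) :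
    ∃ V : Set E, IsOpen V ∧ x₀ ∈ V ∧ ∀ μ : Measure E, μ.IsAddHaarMeasure →
      ∀ᵐ x ∂μ, x ∈ V → wpExp p (f x) ≤ wpExp p (f x₀) := by
  obtain ⟨P, r, hP⟩ := hf
  obtain ⟨s, hs, hae⟩ := exists_ne_zero_ae_wpExp_smul_le hP Measure.addHaar
  have hs' : (s : ℚ_[p]) ≠ 0 := PadicInt.coe_ne_zero.2 hs
  refine ⟨(fun x ↦ (s : ℚ_[p])⁻¹ • (x - x₀)) ⁻¹' eball 0 r, isOpen_eball.preimage (by fun_prop),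
    by simpa using hP.r_pos, fun μ _ ↦ ?_⟩
  filter_upwards [(quasiMeasurePreserving_smul_sub (inv_ne_zero hs') x₀ μ _).ae hae] with x hx hxV
  simpa only [smul_inv_smul₀ hs', add_sub_cancel] using hx hxV

end Neighborhood

/-- If `M ⊆ ℚ_p^n` is an analytic submanifold, `v ≥ n` and
`w_p(y₀) ≤ v` for some `y₀ ∈ M`, then for almost every `y` in a neighbourhood of `y₀`
in `M` (w.r.t. the smooth measure class on `M`) one has `w_p(y) ≤ v`. -/
theorem statement2 (p : ℕ) [Fact p.Prime] (n d : ℕ) (hn : 1 ≤ n)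
    (M : Set (Fin n → ℚ_[p])) (hM : IsAnalyticSubmanifold p d n M)
    (v : ℝ) (hv : (n : ℝ) ≤ v)
    (y₀ : Fin n → ℚ_[p]) (hy₀ : y₀ ∈ M)
    (hw : wpExp p y₀ ≤ ENNReal.ofReal v) :
    ∃ (U : Set (Fin d → ℚ_[p])) (f : (Fin d → ℚ_[p]) → (Fin n → ℚ_[p])),
      IsChart p d n M U f ∧ y₀ ∈ f '' U ∧
      ∀ (μ : Measure (Fin d → ℚ_[p])), μ.IsAddHaarMeasure →
        ∀ᵐ x ∂μ, x ∈ U → wpExp p (f x) ≤ ENNReal.ofReal v := by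
  obtain ⟨U, f, hchart, x₀, hx₀, rfl⟩ := hM.2 y₀ hy₀
  obtain ⟨V, hV, hx₀V, hae⟩ := statement2_general (hchart.2.1 x₀ hx₀)
  refine ⟨U ∩ V, f, hchart.mono (hchart.1.inter hV) Set.inter_subset_left,
    ⟨x₀, ⟨hx₀, hx₀V⟩, rfl⟩, fun μ hμ ↦ ?_⟩
  filter_upwards [hae μ hμ] with x hx hxU
  exact (hx hxU.2).trans hw

end PadicDioph
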